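/- arXiv:1711.03073 — 8 statements merged into one kernel-verified Lean document; each statement's English description precedes it below -/
import Mathlib

section
/- Let n ≥ 1 and let f : {-1,1}^n → ℝ be any function. Then f can be implemented on the Boolean hypercube by a Sum-of-ReLU circuit using at most min{2^n, Σ_{S ⊆ {1,...,n}, f̂(S) ≠ 0} |S|} ReLU gates; that is, there exist w ≤ min{2^n, Σ_{S: f̂(S)≠0} |S|}, vectors a_1,...,a_w ∈ ℝ^n and reals b_1,...,b_w, c_0, c_1,...,c_w such that f(x) = c_0 + Σ_{i=1}^w c_i · max(0, ⟨a_i, x⟩ + b_i) for every x ∈ {-1,1}^n. -/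
/-!
Both bounds come from writing `f` as a sum of functions that are each computed by few gates;
gate counts add under sums (`ReluRep.sum`).

* For the bound `2 ^ n`: on the hypercube, `max 0 (⟨y, x⟩ - (n - 1))` is the indicator of `x = y`
  (`relu_indicator`), so `f = ∑ y, f y * 1_{x = y}` uses one gate per point.
* For the Fourier bound: by Fourier inversion (`fourier_inversion`), `f` is the sum of its nonzero
  terms `f̂(S) χ_S`. The parity `χ_S(x)` depends only on the number `t ∈ {0, …, |S|}` of coordinates
  in `S` where `x` is `1`, and this `t` is an affine function of `x`. Every function on
  `{0, …, k}` is a constant plus a combination of the `k` functions `max 0 (t - i)`, `i < k`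
  (`exists_relu_interpolation`), so each term costs `|S|` gates.
-/

/-- The ±1 real encoding of a Boolean vector. -/
def pmEnc {n : ℕ} (x : Fin n → Bool) : Fin n → ℝ := fun i => if x i then 1 else -1

/-- The Fourier coefficient of `f : {-1,1}^n → ℝ` at `S ⊆ {1,…,n}`. -/
noncomputable def boolFourierCoeff {n : ℕ} (f : (Fin n → Bool) → ℝ) (S : Finset (Fin n)) : ℝ :=
  (1 / 2 ^ n) * ∑ x : Fin n → Bool, f x * ∏ i ∈ S, pmEnc x i
/-- `f` is computed on the hypercube by a Sum-of-ReLU circuit with exactly `w` gates. -/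
def ReluRep {n : ℕ} (w : ℕ) (f : (Fin n → Bool) → ℝ) : Prop :=
  ∃ (a : Fin w → Fin n → ℝ) (b c : Fin w → ℝ) (c₀ : ℝ),
    ∀ x : Fin n → Bool, f x = c₀ + ∑ i, c i * max 0 (∑ j, a i j * pmEnc x j + b i)

lemma ReluRep.const {n : ℕ} (r : ℝ) : ReluRep 0 (fun _ : Fin n → Bool => r) :=
  ⟨fun _ _ => 0, fun _ => 0, fun _ => 0, r, fun x => by simp⟩

lemma ReluRep.gate {n : ℕ} (a : Fin n → ℝ) (b c : ℝ) :
    ReluRep 1 (fun x : Fin n → Bool => c * max 0 (∑ j, a j * pmEnc x j + b)) :=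
  ⟨fun _ => a, fun _ => b, fun _ => c, 0, fun x => by simp⟩

lemma ReluRep.add {n w₁ w₂ : ℕ} {f g : (Fin n → Bool) → ℝ} (hf : ReluRep w₁ f)
    (hg : ReluRep w₂ g) : ReluRep (w₁ + w₂) (fun x => f x + g x) := by
  obtain ⟨a, b, c, c₀, h⟩ := hf
  obtain ⟨a₂, b₂, c₂, d₀, h₂⟩ := hg
  refine ⟨Fin.append a a₂, Fin.append b b₂, Fin.append c c₂, c₀ + d₀, fun x => ?_⟩
  simp only [h x, h₂ x, Fin.sum_univ_add, Fin.append_left, Fin.append_right]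
  ring

lemma ReluRep.sum {n : ℕ} {ι : Type*} (s : Finset ι) (w : ι → ℕ)
    (f : ι → (Fin n → Bool) → ℝ) (h : ∀ i ∈ s, ReluRep (w i) (f i)) :
    ReluRep (∑ i ∈ s, w i) (fun x => ∑ i ∈ s, f i x) := by
  classical
  induction s using Finset.induction_on with
  | empty => simpa using ReluRep.const 0
  | insert i s hi ih =>
    simp only [Finset.sum_insert hi]
    exact (h i (Finset.mem_insert_self i s)).add
      (ih fun j hj => h j (Finset.mem_insert_of_mem hj))

lemma pmEnc_mul_pmEnc {n : ℕ} (x y : Fin n → Bool) (i : Fin n) :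
    pmEnc y i * pmEnc x i = if x i = y i then 1 else -1 := by
  unfold pmEnc
  cases x i <;> cases y i <;> simp

/-- If `x ≠ y`, at least one of the `n` summands of `⟨y, x⟩` is `-1`, hence `⟨y, x⟩ ≤ n - 2`. -/
lemma relu_indicator {n : ℕ} (x y : Fin n → Bool) :
    max 0 (∑ j, pmEnc y j * pmEnc x j + (1 - n : ℝ)) = if x = y then 1 else 0 := by
  simp only [pmEnc_mul_pmEnc]
  split_ifs with h
  · subst h
    simp
  · obtain ⟨i, hi⟩ := Function.ne_iff.mp h
    apply max_eq_left
    have hle : ∑ j, (if x j = y j then (1 : ℝ) else -1) ≤ ∑ j, (if j = i then (-1 : ℝ) else 1) := by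
      refine Finset.sum_le_sum fun j _ => ?_
      by_cases hj : j = i
      · subst hj
        simp [hi]
      · simp only [hj, if_false]
        split_ifs <;> norm_num
    have heq : ∑ j : Fin n, (if j = i then (-1 : ℝ) else 1) = n - 2 := by
      have : ∀ j : Fin n, (if j = i then (-1 : ℝ) else 1) = 1 - if j = i then 2 else 0 := by
        intro j
        split_ifs <;> norm_num
      simp [this, Finset.sum_sub_distrib]
    linarith

lemma reluRep_two_pow {n : ℕ} (f : (Fin n → Bool) → ℝ) : ReluRep (2 ^ n) f := by
  have h := ReluRep.sum Finset.univ (fun _ => 1) _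
    (fun y _ => ReluRep.gate (pmEnc y) (1 - n : ℝ) (f y))
  simpa [relu_indicator] using h

lemma fourier_inversion {n : ℕ} (f : (Fin n → Bool) → ℝ) (x : Fin n → Bool) :
    f x = ∑ S : Finset (Fin n), boolFourierCoeff f S * ∏ i ∈ S, pmEnc x i := by
  -- Orthogonality of the characters: `∑ S, χ_S(y) χ_S(x) = ∏ i, (1 + y i * x i)`.
  have key : ∀ y : Fin n → Bool, ∑ S : Finset (Fin n), (∏ i ∈ S, pmEnc y i) * ∏ i ∈ S, pmEnc x i
      = if x = y then 2 ^ n else 0 := by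
    intro y
    simp only [← Finset.prod_mul_distrib]
    rw [← Finset.powerset_univ, ← Finset.prod_one_add]
    simp only [pmEnc_mul_pmEnc]
    split_ifs with h
    · subst h
      norm_num
    · obtain ⟨i, hi⟩ := Function.ne_iff.mp h
      exact Finset.prod_eq_zero (Finset.mem_univ i) (by simp [hi])
  unfold boolFourierCoeff
  simp only [mul_assoc, Finset.sum_mul]
  rw [← Finset.mul_sum, Finset.sum_comm]
  simp only [← Finset.mul_sum, key]
  simp
  field_simp

/-- Interpolation on `{0, …, k}`: the coefficient of `max 0 (t - k)` corrects the value at `k + 1`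
without affecting the values at `t ≤ k`. -/
lemma exists_relu_interpolation (g : ℕ → ℝ) (k : ℕ) :
    ∃ c : ℕ → ℝ, ∀ t ≤ k, g t = g 0 + ∑ i ∈ Finset.range k, c i * max 0 ((t : ℝ) - i) := by
  induction k with
  | zero => exact ⟨0, fun t ht => by simp [Nat.le_zero.mp ht]⟩
  | succ k ih =>
    obtain ⟨c, hc⟩ := ih
    refine ⟨fun i => if i = k then
      g (k + 1) - g 0 - ∑ j ∈ Finset.range k, c j * max 0 (((k + 1 : ℕ) : ℝ) - j) else c i,
      fun t ht => ?_⟩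
    have hsum : ∀ r : ℝ, ∑ i ∈ Finset.range k, (if i = k then r else c i) * max 0 ((t : ℝ) - i)
        = ∑ i ∈ Finset.range k, c i * max 0 ((t : ℝ) - i) := fun r =>
      Finset.sum_congr rfl fun i hi => by rw [if_neg (Finset.mem_range.mp hi).ne]
    rw [Finset.sum_range_succ, hsum]
    simp only [if_true]
    rcases Nat.lt_or_ge k t with h | h
    · obtain rfl : t = k + 1 := by omega
      have : max 0 (((k + 1 : ℕ) : ℝ) - k) = 1 := by
        push_cast
        rw [add_sub_cancel_left]
        norm_num
      rw [this]
      ring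
    · have : max 0 ((t : ℝ) - k) = 0 := max_eq_left (by
        have : (t : ℝ) ≤ k := by exact_mod_cast h
        linarith)
      rw [this, mul_zero, add_zero]
      exact hc t h

lemma reluRep_parity {n : ℕ} (S : Finset (Fin n)) (r : ℝ) :
    ReluRep S.card (fun x => r * ∏ i ∈ S, pmEnc x i) := by
  obtain ⟨c, hc⟩ := exists_relu_interpolation (fun t => r * (-1) ^ (S.card - t)) S.card
  -- `t` is the number of coordinates in `S` equal to `1`, written as `∑ i ∈ S, (x i + 1) / 2`.
  have h := (ReluRep.const (n := n) (r * (-1) ^ (S.card - 0))).add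
    (ReluRep.sum (Finset.range S.card) (fun _ => 1) _
      (fun k _ => ReluRep.gate (fun j : Fin n => if j ∈ S then 1 / 2 else 0)
        ((S.card : ℝ) / 2 - k) (c k)))
  simp only [Finset.sum_const, Finset.card_range, smul_eq_mul, mul_one, zero_add] at h
  convert h using 2 with x
  have hprod : ∏ i ∈ S, pmEnc x i = (-1) ^ (S.card - (S.filter (fun i => x i = true)).card) := by
    unfold pmEnc
    rw [Finset.prod_ite, Finset.prod_const_one, one_mul, Finset.prod_const]
    congr 1
    have := Finset.card_filter_add_card_filter_not (s := S) (fun i => x i = true)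
    omega
  have hcount : ∑ j, (if j ∈ S then (1 / 2 : ℝ) else 0) * pmEnc x j
      = (S.filter (fun i => x i = true)).card - (S.card : ℝ) / 2 := by
    have hp : ∀ j, pmEnc x j = 2 * (if x j = true then 1 else 0) - 1 := by
      intro j
      unfold pmEnc
      split_ifs <;> norm_num
    simp only [ite_mul, zero_mul, Finset.sum_ite_mem, Finset.univ_inter]
    rw [← Finset.mul_sum]
    simp only [hp, Finset.sum_sub_distrib, ← Finset.mul_sum, Finset.sum_boole, Finset.sum_const,
      nsmul_eq_mul]
    ring
  rw [hprod, hcount]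
  have := hc _ (Finset.card_filter_le S (fun i => x i = true))
  rw [this]
  congr 1
  refine Finset.sum_congr rfl fun i _ => ?_
  congr 2
  ring

open Classical in
/-- any `f : {-1,1}^n → ℝ` is computed on the hypercube by a Sum-of-ReLU
circuit with at most `min{2^n, Σ_{S : f̂(S) ≠ 0} |S|}` ReLU gates. -/
theorem sum_of_relu_represents_any_pseudo_boolean (n : ℕ) (hn : 1 ≤ n)
    (f : (Fin n → Bool) → ℝ) :
    ∃ w : ℕ,
      w ≤ min (2 ^ n)
        (∑ S ∈ Finset.univ.filter (fun S : Finset (Fin n) => boolFourierCoeff f S ≠ 0), S.card) ∧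
      ∃ (a : Fin w → Fin n → ℝ) (b c : Fin w → ℝ) (c₀ : ℝ),
        ∀ x : Fin n → Bool,
          f x = c₀ + ∑ i, c i * max 0 (∑ j, a i j * pmEnc x j + b i) := by
  by_cases hle : 2 ^ n ≤
      ∑ S ∈ Finset.univ.filter (fun S : Finset (Fin n) => boolFourierCoeff f S ≠ 0), S.card
  · exact ⟨2 ^ n, le_min le_rfl hle, reluRep_two_pow f⟩
  · refine ⟨_, le_min (not_le.mp hle).le le_rfl, ?_⟩
    have h := ReluRep.sum
      (Finset.univ.filter (fun S : Finset (Fin n) => boolFourierCoeff f S ≠ 0)) Finset.card _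
      (fun S _ => reluRep_parity S (boolFourierCoeff f S))
    have hf : f = fun x => ∑ S ∈ Finset.univ.filter
        (fun S : Finset (Fin n) => boolFourierCoeff f S ≠ 0),
        boolFourierCoeff f S * ∏ i ∈ S, pmEnc x i := by
      funext x
      rw [Finset.sum_filter_of_ne fun S _ hS => left_ne_zero_of_mul hS]
      exact fourier_inversion f x
    rw [← hf] at h
    exact h
end

section
/- The function (x_1, x_2) ↦ max{0, x_1, x_2} on ℝ² cannot be computed by any Sum-of-ReLU circuit: for every w ∈ ℕ, vectors a_1,...,a_w ∈ ℝ² and reals b_1,...,b_w, c_0, c_1,...,c_w, the function x ↦ c_0 + Σ_{i=1}^w c_i · max(0, ⟨a_i, x⟩ + b_i) is not equal to max{0, x_1, x_2} on all of ℝ². -/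
/-!
For a function `f`, let `g x = f x - f (-x)`. Since `max 0 s - max 0 (-s) = s`, a ReLU gate without
bias has linear `g`, and a bias `b` perturbs `g` by at most `2 * |b|`. So for a Sum-of-ReLU circuit
the additivity defect `g x + g y - g (x + y)` is bounded uniformly in `x` and `y`
(`abs_gate_defect_le`). For `f = max {0, x₁, x₂}`, `x = (t, 0)` and `y = (0, t)` with `t > 0`,
the three values of `g` all equal `t`, so the defect is `t`, which is unbounded.
-/

lemma abs_relu_odd_sub_le (s b : ℝ) :
    |max 0 (s + b) - max 0 (-s + b) - s| ≤ 2 * |b| := by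
  rw [abs_le]
  rcases max_cases 0 (s + b) with h | h <;> rcases max_cases 0 (-s + b) with h' | h' <;>
    rcases abs_cases b with h'' | h'' <;> constructor <;> linarith

/-- The additivity defect of the odd part of a single gate, at arguments whose inner products with
the weight vector are `p` and `q`, is bounded independently of `p` and `q`. -/
lemma abs_gate_defect_le (p q b : ℝ) :
    |(max 0 (p + b) - max 0 (-p + b)) + (max 0 (q + b) - max 0 (-q + b))
      - (max 0 (p + q + b) - max 0 (-(p + q) + b))| ≤ 6 * |b| := by
  have h₁ := abs_le.1 (abs_relu_odd_sub_le p b)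
  have h₂ := abs_le.1 (abs_relu_odd_sub_le q b)
  have h₃ := abs_le.1 (abs_relu_odd_sub_le (p + q) b)
  rw [abs_le]
  constructor <;> linarith [h₁.1, h₁.2, h₂.1, h₂.2, h₃.1, h₃.2]

/-- no Sum-of-ReLU circuit computes `(x₁,x₂) ↦ max{0, x₁, x₂}` on all of `ℝ²`. -/
theorem max_0_x_y_not_sum_of_relu (w : ℕ) (a : Fin w → Fin 2 → ℝ)
    (b c : Fin w → ℝ) (c₀ : ℝ) :
    ¬ ∀ x : Fin 2 → ℝ,
        c₀ + ∑ i, c i * max 0 (∑ j, a i j * x j + b i) = max 0 (max (x 0) (x 1)) := by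
  intro h
  set C : ℝ := ∑ i, |c i| * (6 * |b i|) with hC
  have hC0 : 0 ≤ C := Finset.sum_nonneg fun i _ => by positivity
  obtain ⟨t, ht, htC⟩ : ∃ t : ℝ, 0 < t ∧ C < t := ⟨C + 1, by linarith, by linarith⟩
  have hf : ∀ u v : ℝ, c₀ + ∑ i, c i * max 0 (a i 0 * u + a i 1 * v + b i)
      = max 0 (max u v) := fun u v => by
    simpa [Fin.sum_univ_two] using h ![u, v]
  have e₁ := hf t 0
  have e₂ := hf (-t) 0
  have e₃ := hf 0 t
  have e₄ := hf 0 (-t)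
  have e₅ := hf t t
  have e₆ := hf (-t) (-t)
  have hn : -t ≤ 0 := by linarith
  simp only [mul_zero, add_zero, zero_add, mul_neg, max_self, max_eq_left ht.le,
    max_eq_right ht.le, max_eq_left hn, max_eq_right hn] at e₁ e₂ e₃ e₄ e₅ e₆
  have key : t = ∑ i, c i *
      ((max 0 (a i 0 * t + b i) - max 0 (-(a i 0 * t) + b i))
        + (max 0 (a i 1 * t + b i) - max 0 (-(a i 1 * t) + b i))
        - (max 0 (a i 0 * t + a i 1 * t + b i) - max 0 (-(a i 0 * t + a i 1 * t) + b i))) := by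
    simp only [mul_sub, mul_add, Finset.sum_sub_distrib, Finset.sum_add_distrib, neg_add]
    linarith
  have bound : t ≤ C := by
    rw [key, hC]
    refine Finset.sum_le_sum fun i _ => (le_abs_self _).trans ?_
    rw [abs_mul]
    exact mul_le_mul_of_nonneg_left (abs_gate_defect_le _ _ _) (abs_nonneg _)
  linarith
end

section
/- Let n ≥ 1 and define f : {-1,1}^n → ℝ by f(x) = Σ_{i=1}^n 2^i · (1 + x_i)/2. Then (a) f can be implemented on {-1,1}^n by a Sum-of-ReLU circuit with at most 2 ReLU gates, and (b) every Sum-of-LTF circuit with w LTF gates that agrees with f on all of {-1,1}^n must have w ≥ n. -/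
/-- The function `f(x) = Σ_{i=1}^n 2^i (1+x_i)/2` on `{-1,1}^n`. -/
noncomputable def binValFun {n : ℕ} (x : Fin n → Bool) : ℝ :=
  ∑ i : Fin n, 2 ^ ((i : ℕ) + 1) * ((1 + pmEnc x i) / 2)

/-- `f` is twice the natural number whose set of binary digits equal to `1` is `{i | x i}`. -/
lemma binValFun_eq_two_mul {n : ℕ} (x : Fin n → Bool) :
    binValFun x =
      2 * ((∑ i ∈ (Finset.univ.filter fun i => x i = true).map Fin.valEmbedding, 2 ^ i : ℕ) : ℝ) := by
  rw [Finset.sum_map, Finset.sum_filter]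
  push_cast
  rw [Finset.mul_sum]
  refine Finset.sum_congr rfl fun i _ => ?_
  by_cases h : x i = true <;> simp [pmEnc, h, pow_succ] <;> ring

lemma binValFun_nonneg {n : ℕ} (x : Fin n → Bool) : 0 ≤ binValFun x := by
  rw [binValFun_eq_two_mul]
  positivity

lemma binValFun_injective (n : ℕ) : Function.Injective (binValFun : (Fin n → Bool) → ℝ) := by
  intro x y h
  rw [binValFun_eq_two_mul, binValFun_eq_two_mul] at h
  have h' := Nat.cast_injective (mul_left_cancel₀ two_ne_zero h)
  have hs := Finset.map_injective _ (Finset.geomSum_injective le_rfl h')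
  funext i
  have hi := Finset.ext_iff.mp hs i
  simp only [Finset.mem_filter, Finset.mem_univ, true_and] at hi
  exact Bool.eq_iff_iff.mpr hi

/-- (a) `f(x) = Σ_i 2^i (1+x_i)/2` is computed on `{-1,1}^n` by a Sum-of-ReLU
circuit with at most 2 ReLU gates; (b) any Sum-of-LTF circuit computing `f` on `{-1,1}^n`
needs at least `n` LTF gates. -/
theorem linear_function_relu_vs_ltf (n : ℕ) (hn : 1 ≤ n) :
    (∃ w : ℕ, w ≤ 2 ∧
      ∃ (a : Fin w → Fin n → ℝ) (b c : Fin w → ℝ) (c₀ : ℝ),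
        ∀ x : Fin n → Bool,
          binValFun x = c₀ + ∑ i, c i * max 0 (∑ j, a i j * pmEnc x j + b i)) ∧
    (∀ (w : ℕ) (a : Fin w → Fin n → ℝ) (b c : Fin w → ℝ) (c₀ : ℝ),
      (∀ x : Fin n → Bool,
        binValFun x =
          c₀ + ∑ i, c i * (if 0 ≤ ∑ j, a i j * pmEnc x j + b i then 1 else 0)) →
      n ≤ w) := by
  refine ⟨⟨1, by norm_num, fun _ j => 2 ^ (j : ℕ), fun _ => ∑ j : Fin n, 2 ^ (j : ℕ),
    fun _ => 1, 0, fun x => ?_⟩, fun w a b c c₀ h => ?_⟩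
  · have key : binValFun x =
        ∑ j : Fin n, 2 ^ (j : ℕ) * pmEnc x j + ∑ j : Fin n, 2 ^ (j : ℕ) := by
      rw [binValFun, ← Finset.sum_add_distrib]
      exact Finset.sum_congr rfl fun j _ => by ring
    simp [← key, binValFun_nonneg]
  · have hinj : Function.Injective (fun (x : Fin n → Bool) (i : Fin w) =>
        decide (0 ≤ ∑ j, a i j * pmEnc x j + b i)) := by
      intro x y hxy
      apply binValFun_injective n
      rw [h x, h y]
      congr 1
      refine Finset.sum_congr rfl fun i _ => ?_
      have hi := congrFun hxy i
      simp only [decide_eq_decide] at hi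
      simp only [hi]
    have hcard := Fintype.card_le_of_injective _ hinj
    simp only [Fintype.card_pi, Fintype.card_bool, Finset.prod_const, Finset.card_univ,
      Fintype.card_fin] at hcard
    exact (Nat.pow_le_pow_iff_right (by norm_num)).mp hcard
end

section
/- For every δ ∈ (0, 1/2) there exist N ∈ ℕ and a constant c > 0 such that for all n ≥ N and all ε with √(2·(log₂ n)^{2/(2-δ)} / n) < ε ≤ 1/2, the following holds: if an LTF-of-ReLU circuit F with w ReLU gates on the inputs of the Andreev function A_n satisfies |{(x,a) : F(x,a) = A_n(x,a)}| ≥ (1/2 + ε) · 2^{M + k·r} (where M, k, r are as in the definition of A_n), then w ≥ c · ε^{2(1-δ)} · n^{1-δ}. -/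
/-!
Write `k`, `r`, `M` for the parameters of the Andreev function and `N = 2 ^ k ≥ n / 4`. The proof
gives the stronger bound `w ≥ ε² n / 104`, by combining a random restriction with a
counting argument in which each function is charged its description length.

*Restriction.* Fix all of the matrix `a` except one column `j`. As `y ∈ {0,1}^k` runs over the
values of that column, the address `bin(b)` runs injectively over `N` positions of `x`, so that for
uniform `x` the target restricted to the column is a uniformly random function of `y`. The
restricted circuit is `y ↦ [c₀ + ∑ cᵢ max 0 (vᵢ y + τᵢ(x)) ≥ 0]`: the functions `vᵢ` do not
depend on `x`, which enters only through the real biases `τᵢ(x)`.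

*Description length.* Describe the restricted circuit by the sets `Pᵢ = {y | vᵢ y + τᵢ ≥ 0}` and
then by its set of accepted points. A constant `Pᵢ` costs `O(1)`; a nonconstant (`Mixed`) one is
one of at most `(N + 1) ^ 2` threshold sets, by the Sauer-Shelah lemma. If `s` of the `Pᵢ` are mixed
then, given all `Pᵢ`, the circuit is a threshold of a function in a space of dimension `s + 2`, so
it is one of at most `(N + 1) ^ (s + 2)` functions. The correlation of a fixed function with the
random target has moment generating function at most `exp (l² N / 2)`. A union bound weighted by
description length (`sum_corr_le`) yields
`l · E[correlation] ≤ l² N / 2 + w log 4 + (3 E[s] + 2) log (N + 1)`.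

*Few mixed gates.* For a uniform column `j` and uniform `a`, a fixed gate is mixed with probability
at most `4 / k` (`sum_card_colActive_le`). It is mixed only if the affine form of the gate is at
most `R j = ∑ i, |u i j|` in absolute value. If at least `2 k⁴` columns `s` have `R s ≥ R j`,
each of them contains a weight of size at least `R j / k`, and the Littlewood-Offord inequality
(Erdős' proof through Sperner's theorem) bounds the probability by `2 / k`; all but `2 k⁴` columns
are of this kind.

Hence `E[s] ≤ 4 w / k`, and `l = 2 ε` gives `2 ε² N ≤ 26 w + 4 k` (`advantage_bound`). The lower
bound assumed on `ε` makes the term `4 k` negligible against `ε² n`.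
-/

/-- `M = ⌊n/2⌋`, the number of `x`-inputs of the Andreev function. -/
def andreevM (n : ℕ) : ℕ := n / 2

/-- `k = ⌊log₂(n/2)⌋`, the number of rows of the matrix input of the Andreev function. -/
def andreevK (n : ℕ) : ℕ := Nat.log 2 (n / 2)

/-- `r = ⌊n/(2k)⌋`, the number of columns of the matrix input of the Andreev function. -/
def andreevR (n : ℕ) : ℕ := n / (2 * andreevK n)

/-- The Andreev function `A_n(x, a) = x_{bin(b₁,…,b_k)}` where `bᵢ` is the parity of the
`i`-th row of `a` and `bin` reads `b₁,…,b_k` as a binary number (most significant first). -/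
def andreev (n : ℕ) (x : Fin (andreevM n) → Bool)
    (a : Fin (andreevK n) → Fin (andreevR n) → Bool) : Prop :=
  let bin : ℕ := ∑ i : Fin (andreevK n),
    if (∑ j : Fin (andreevR n), if a i j then 1 else 0) % 2 = 1
      then 2 ^ (andreevK n - 1 - (i : ℕ)) else 0
  if h : bin < andreevM n then x ⟨bin, h⟩ = true else False

/-- The 0/1 real encoding of a Boolean value. -/
def zo (b : Bool) : ℝ := if b then 1 else 0

/-! ### The Littlewood-Offord inequality -/

theorem centralBinom_sq_le (q : ℕ) : q.centralBinom ^ 2 * (2 * q + 1) ≤ 16 ^ q := by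
  induction q with
  | zero => simp
  | succ q ih =>
    have h := Nat.succ_mul_centralBinom_succ q
    have h2 : (q + 1) ^ 2 * ((q + 1).centralBinom ^ 2 * (2 * (q + 1) + 1))
        ≤ (q + 1) ^ 2 * 16 ^ (q + 1) := by
      calc (q + 1) ^ 2 * ((q + 1).centralBinom ^ 2 * (2 * (q + 1) + 1))
          = ((q + 1) * (q + 1).centralBinom) ^ 2 * (2 * q + 3) := by ring
        _ = (4 * (2 * q + 1) * (2 * q + 3)) * (q.centralBinom ^ 2 * (2 * q + 1)) := by
            rw [h]; ring
        _ ≤ (16 * (q + 1) ^ 2) * 16 ^ q := by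
            refine Nat.mul_le_mul ?_ ih
            nlinarith
        _ = _ := by ring
    exact Nat.le_of_mul_le_mul_left h2 (by positivity)

/-- Erdős' argument: after the negative `β i` are made positive by complementing membership of
`i`, subset sums increase by at least `ρ` along strict inclusions, so the subsets whose sum falls in
a half-open interval of length `ρ` form an antichain. -/
theorem card_subset_sum_le (m : ℕ) (β : Fin m → ℝ) (ρ θ : ℝ) (hβ : ∀ i, ρ ≤ |β i|) :
    (Finset.univ.filter (fun T : Finset (Fin m) =>
      θ ≤ ∑ i ∈ T, β i ∧ ∑ i ∈ T, β i < θ + ρ)).card ≤ m.choose (m / 2) := by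
  classical
  set neg : Finset (Fin m) := Finset.univ.filter (fun i => β i < 0) with hneg
  set A := Finset.univ.filter (fun T : Finset (Fin m) =>
      θ ≤ ∑ i ∈ T, β i ∧ ∑ i ∈ T, β i < θ + ρ) with hA
  have key : ∀ T : Finset (Fin m),
      ∑ i ∈ T, β i = ∑ i ∈ neg, β i + ∑ i ∈ symmDiff T neg, |β i| := by
    intro T
    have e : ∀ U : Finset (Fin m), ∀ f : Fin m → ℝ,
        ∑ i ∈ U, f i = ∑ i, if i ∈ U then f i else 0 := by
      intro U f; simp
    rw [e T, e neg, e (symmDiff T neg), ← Finset.sum_add_distrib]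
    refine Finset.sum_congr rfl fun i _ => ?_
    by_cases h1 : i ∈ T <;> by_cases h2 : β i < 0
    · simp [Finset.mem_symmDiff, hneg, h1, h2]
    · simp [Finset.mem_symmDiff, hneg, h1, h2, abs_of_nonneg (not_lt.mp h2)]
    · simp [Finset.mem_symmDiff, hneg, h1, h2, abs_of_neg h2]
    · simp [Finset.mem_symmDiff, hneg, h1, h2]
  have inj : Function.Injective (fun T : Finset (Fin m) => symmDiff T neg) :=
    symmDiff_left_injective neg
  have hanti : IsAntichain (· ⊆ ·)
      ((A.image (fun T => symmDiff T neg) : Finset (Finset (Fin m))) : Set (Finset (Fin m))) := by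
    intro U hU V hV hne hsub
    simp only [Finset.coe_image, Set.mem_image, Finset.mem_coe] at hU hV
    obtain ⟨S, hS, rfl⟩ := hU
    obtain ⟨T, hT, rfl⟩ := hV
    simp only [hA, Finset.mem_filter, Finset.mem_univ, true_and] at hS hT
    rw [key S] at hS
    rw [key T] at hT
    obtain ⟨i, hi, hi'⟩ := Finset.exists_of_ssubset (Finset.ssubset_iff_subset_ne.2 ⟨hsub, hne⟩)
    have h3 : ∑ i ∈ insert i (symmDiff S neg), |β i| ≤ ∑ i ∈ symmDiff T neg, |β i| :=
      Finset.sum_le_sum_of_subset_of_nonneg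
        (Finset.insert_subset hi hsub) (fun _ _ _ => abs_nonneg _)
    rw [Finset.sum_insert hi'] at h3
    linarith [hβ i, hS.1, hT.2]
  have := hanti.sperner
  rwa [Finset.card_image_of_injective _ inj, Fintype.card_fin] at this

/-- **Littlewood-Offord inequality** for an affine form in Boolean variables of which `m`, indexed by
`e`, have coefficients at least `ρ` in absolute value; the other variables are arbitrary. The count
is averaged over the flips of subsets of the `m` distinguished variables. -/
theorem littlewood_offord {ι : Type*} [Fintype ι] [DecidableEq ι] (α : ι → ℝ) (t ρ θ : ℝ)
    (m : ℕ) (e : Fin m → ι) (he : Function.Injective e) (hα : ∀ i, ρ ≤ |α (e i)|) :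
    2 ^ m * (Finset.univ.filter (fun z : ι → Bool =>
      θ ≤ ∑ i, α i * zo (z i) + t ∧ ∑ i, α i * zo (z i) + t < θ + ρ)).card
      ≤ m.choose (m / 2) * 2 ^ Fintype.card ι := by
  classical
  set G : (ι → Bool) → ℝ := fun z => ∑ i, α i * zo (z i) + t with hG
  let fl : Finset (Fin m) → (ι → Bool) → (ι → Bool) := fun T z i =>
    xor (z i) (decide (i ∈ T.image e))
  have hinv : ∀ T, Function.Involutive (fl T) := by
    intro T z; funext i; simp [fl]
  have hflip : ∀ T z,
      G (fl T z) = G z + ∑ i ∈ T, α (e i) * (zo (!(z (e i))) - zo (z (e i))) := by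
    intro T z
    have : ∑ i ∈ T, α (e i) * (zo (!(z (e i))) - zo (z (e i)))
        = ∑ i ∈ T.image e, α i * (zo (!(z i)) - zo (z i)) :=
      (Finset.sum_image (f := fun i => α i * (zo (!(z i)) - zo (z i)))
        (fun a _ b _ h => he h)).symm
    rw [this, hG]
    have : ∑ i ∈ T.image e, α i * (zo (!(z i)) - zo (z i))
      = ∑ i, if i ∈ T.image e then α i * (zo (!(z i)) - zo (z i)) else 0 := by
        rw [Finset.sum_ite_mem, Finset.univ_inter]
    rw [this]
    have h : ∀ i, α i * zo (fl T z i) = α i * zo (z i) +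
        if i ∈ T.image e then α i * (zo (!(z i)) - zo (z i)) else 0 := by
      intro i
      by_cases h : i ∈ T.image e
      · simp only [fl, h, decide_true, Bool.xor_true, if_true]; ring
      · simp only [fl, h, decide_false, Bool.xor_false, if_false]; ring
    simp only [h, Finset.sum_add_distrib]; ring
  have h1 : ∑ T : Finset (Fin m),
      (Finset.univ.filter (fun z => θ ≤ G (fl T z) ∧ G (fl T z) < θ + ρ)).card
        = 2 ^ m * (Finset.univ.filter (fun z => θ ≤ G z ∧ G z < θ + ρ)).card := by
    have : ∀ T : Finset (Fin m),
        (Finset.univ.filter (fun z => θ ≤ G (fl T z) ∧ G (fl T z) < θ + ρ)).card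
        = (Finset.univ.filter (fun z => θ ≤ G z ∧ G z < θ + ρ)).card := by
      intro T
      refine Finset.card_bij' (fun z _ => fl T z) (fun z _ => fl T z) ?_ ?_ ?_ ?_
      · intro z hz; simpa using hz
      · intro z hz
        simp only [Finset.mem_filter, Finset.mem_univ, true_and] at hz ⊢
        rwa [hinv T z]
      · intro z _; exact hinv T z
      · intro z _; exact hinv T z
    rw [Finset.sum_congr rfl fun T _ => this T]; simp
  rw [← h1]
  simp_rw [Finset.card_filter]
  rw [Finset.sum_comm]
  simp_rw [← Finset.card_filter]
  calc _ ≤ ∑ z : ι → Bool, m.choose (m / 2) := by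
        refine Finset.sum_le_sum fun z _ => ?_
        have := card_subset_sum_le m (fun i => α (e i) * (zo (!(z (e i))) - zo (z (e i)))) ρ
          (θ - G z)
          (by
            intro i
            have h : |zo (!(z (e i))) - zo (z (e i))| = 1 := by
              cases z (e i) <;> simp [zo]
            rw [abs_mul, h, mul_one]; exact hα i)
        refine le_trans (Finset.card_le_card ?_) this
        intro T hT
        simp only [Finset.mem_filter, Finset.mem_univ, true_and, hflip] at hT ⊢
        constructor <;> linarith [hT.1, hT.2]
    _ = _ := by simp [mul_comm]
/-! ### A gate is rarely mixed on a random column -/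

/-- The matrix `a` with its column `j` replaced by `y`. -/
def colUpd {k r : ℕ} (a : Fin k → Fin r → Bool) (j : Fin r) (y : Fin k → Bool) :
    Fin k → Fin r → Bool := fun i s => if s = j then y i else a i s

/-- The affine form with weights `u` and constant term `t`, evaluated at a Boolean matrix. -/
def aff {k r : ℕ} (u : Fin k → Fin r → ℝ) (t : ℝ) (a : Fin k → Fin r → Bool) : ℝ :=
  ∑ i, ∑ s, u i s * zo (a i s) + t

/-- The affine form takes both signs (`≥ 0` and `< 0`) as column `j` of `a` varies. -/
def ColActive {k r : ℕ} (u : Fin k → Fin r → ℝ) (t : ℝ) (j : Fin r) (a : Fin k → Fin r → Bool) :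
    Prop :=
  (∃ y, 0 ≤ aff u t (colUpd a j y)) ∧ ∃ y, aff u t (colUpd a j y) < 0

theorem abs_aff_colUpd_sub_le {k r : ℕ} (u : Fin k → Fin r → ℝ) (t : ℝ) (j : Fin r)
    (a : Fin k → Fin r → Bool) (y : Fin k → Bool) :
    |aff u t (colUpd a j y) - aff u t a| ≤ ∑ i, |u i j| := by
  have : aff u t (colUpd a j y) - aff u t a = ∑ i, u i j * (zo (y i) - zo (a i j)) := by
    unfold aff
    rw [add_sub_add_right_eq_sub, ← Finset.sum_sub_distrib]
    refine Finset.sum_congr rfl fun i _ => ?_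
    rw [← Finset.sum_sub_distrib, Finset.sum_eq_single j]
    · simp [colUpd]; ring
    · intro s _ hs; simp [colUpd, hs]
    · simp
  rw [this]
  refine (Finset.abs_sum_le_sum_abs _ _).trans (Finset.sum_le_sum fun i _ => ?_)
  rw [abs_mul]
  refine mul_le_of_le_one_right (abs_nonneg _) ?_
  cases y i <;> cases a i j <;> simp [zo]

theorem littlewood_offord_matrix {k r : ℕ} (u : Fin k → Fin r → ℝ) (t ρ θ : ℝ)
    (q : ℕ) (e : Fin (2 * q) → Fin k × Fin r) (he : Function.Injective e)
    (hu : ∀ i, ρ ≤ |u (e i).1 (e i).2|) :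
    4 ^ q * (Finset.univ.filter (fun a : Fin k → Fin r → Bool =>
      θ ≤ aff u t a ∧ aff u t a < θ + ρ)).card ≤ q.centralBinom * 2 ^ (k * r) := by
  have h := littlewood_offord (fun p : Fin k × Fin r => u p.1 p.2) t ρ θ (2 * q) e he hu
  rw [pow_mul, Fintype.card_prod, Fintype.card_fin, Fintype.card_fin,
    Nat.mul_div_cancel_left q (by norm_num)] at h
  have hc : (Finset.univ.filter (fun a : Fin k → Fin r → Bool =>
      θ ≤ aff u t a ∧ aff u t a < θ + ρ)).card =
      (Finset.univ.filter (fun z : Fin k × Fin r → Bool =>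
        θ ≤ ∑ p, u p.1 p.2 * zo (z p) + t ∧ ∑ p, u p.1 p.2 * zo (z p) + t < θ + ρ)).card := by
    refine Finset.card_equiv (Equiv.curry (Fin k) (Fin r) Bool).symm fun a => ?_
    rw [Finset.mem_filter, Finset.mem_filter]
    simp only [Finset.mem_univ, true_and, Fintype.sum_prod_type]
    rfl
  rw [hc]
  exact h

/-- A column `j` such that at least `2 q` columns have total weight no smaller than that of `j`. The
affine form then lies in an interval of length `2 R j`, covered by `2 k` intervals of length
`R j / k`, and each of the `2 q` columns has an entry of absolute value at least `R j / k`. -/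
theorem card_colActive_le_of_rank {k r q : ℕ} (hk : 0 < k) (u : Fin k → Fin r → ℝ) (t : ℝ)
    (j : Fin r)
    (hrank : 2 * q ≤ (Finset.univ.filter (fun s : Fin r => ∑ i, |u i j| ≤ ∑ i, |u i s|)).card)
    [DecidablePred (ColActive u t j)] :
    4 ^ q * (Finset.univ.filter (ColActive u t j)).card
      ≤ 2 * k * (q.centralBinom * 2 ^ (k * r)) := by
  classical
  set R : Fin r → ℝ := fun s => ∑ i, |u i s| with hR
  have hkR : (0 : ℝ) < k := by exact_mod_cast hk
  have hrange : ∀ a, ColActive u t j a → -R j ≤ aff u t a ∧ aff u t a < R j := by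
    rintro a ⟨⟨y, hy⟩, ⟨y', hy'⟩⟩
    have h1 := abs_le.1 (abs_aff_colUpd_sub_le u t j a y)
    have h2 := abs_le.1 (abs_aff_colUpd_sub_le u t j a y')
    constructor <;> simp only [hR] <;> linarith [h1.1, h1.2, h2.1, h2.2]
  have hR0 : 0 ≤ R j := Finset.sum_nonneg fun i _ => abs_nonneg (u i j)
  rcases hR0.eq_or_lt with h0 | hpos
  · have : Finset.univ.filter (ColActive u t j) = ∅ := by
      refine Finset.filter_eq_empty_iff.2 fun a _ ha => ?_
      have := hrange a ha
      rw [← h0] at this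
      linarith [this.1, this.2]
    rw [this]; simp
  set ρ : ℝ := R j / k with hρ
  have hρpos : 0 < ρ := div_pos hpos hkR
  have hmax : ∀ s, ∃ i, R s ≤ k * |u i s| := by
    intro s
    have : Nonempty (Fin k) := ⟨⟨0, hk⟩⟩
    obtain ⟨i, -, hi⟩ := Finset.exists_max_image (Finset.univ : Finset (Fin k)) (fun i => |u i s|)
      Finset.univ_nonempty
    refine ⟨i, ?_⟩
    have := Finset.sum_le_card_nsmul Finset.univ (fun i => |u i s|) (|u i s|) (fun b hb => hi b hb)
    simpa [hR] using this
  choose top htop using hmax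
  obtain ⟨B, hB, hBcard⟩ := Finset.exists_subset_card_eq hrank
  let f : Fin (2 * q) → Fin r := fun i => B.orderEmbOfFin hBcard i
  have hf : ∀ i, R j ≤ R (f i) := by
    intro i
    have := hB (B.orderEmbOfFin_mem hBcard i)
    simpa using this
  have hfinj : Function.Injective f := (B.orderEmbOfFin hBcard).injective
  have hLO := fun θ => littlewood_offord_matrix u t ρ θ q (fun i => (top (f i), f i))
    (fun a b hab => hfinj (congrArg Prod.snd hab)) (by
      intro i
      have h1 := htop (f i)
      have h2 := hf i
      simp only [hρ]
      rw [div_le_iff₀ hkR]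
      linarith)
  have hcover : Finset.univ.filter (ColActive u t j) ⊆
      (Finset.range (2 * k)).biUnion (fun l => Finset.univ.filter
        (fun a => (-R j + l * ρ) ≤ aff u t a ∧ aff u t a < (-R j + l * ρ) + ρ)) := by
    intro a ha
    have ha' := hrange a (Finset.mem_filter.1 ha).2
    have hnn : 0 ≤ (aff u t a + R j) / ρ := div_nonneg (by linarith [ha'.1]) hρpos.le
    have hl1 := Nat.floor_le hnn
    have hl2 := Nat.lt_floor_add_one ((aff u t a + R j) / ρ)
    rw [le_div_iff₀ hρpos] at hl1
    rw [div_lt_iff₀ hρpos] at hl2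
    have hRρ : R j = k * ρ := by rw [hρ]; field_simp
    simp only [Finset.mem_biUnion, Finset.mem_range, Finset.mem_filter, Finset.mem_univ, true_and]
    refine ⟨⌊(aff u t a + R j) / ρ⌋₊, ?_, by linarith, by linarith⟩
    rw [Nat.floor_lt hnn, div_lt_iff₀ hρpos]
    push_cast
    linarith [ha'.2]
  calc 4 ^ q * (Finset.univ.filter (ColActive u t j)).card
      ≤ 4 ^ q * ∑ l ∈ Finset.range (2 * k), (Finset.univ.filter
        (fun a => (-R j + l * ρ) ≤ aff u t a ∧ aff u t a < (-R j + l * ρ) + ρ)).card :=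
        Nat.mul_le_mul_left _ ((Finset.card_le_card hcover).trans Finset.card_biUnion_le)
    _ ≤ ∑ l ∈ Finset.range (2 * k), q.centralBinom * 2 ^ (k * r) := by
        rw [Finset.mul_sum]
        exact Finset.sum_le_sum fun l _ => hLO _
    _ = _ := by simp

/-- Among the columns with fewer than `m` columns above them, the one minimising `R` has all the
others above it. -/
theorem card_low_rank_le {r : ℕ} (R : Fin r → ℝ) (m : ℕ) :
    (Finset.univ.filter
      (fun j => (Finset.univ.filter (fun s => R j ≤ R s)).card < m)).card ≤ m := by
  set B := Finset.univ.filter (fun j => (Finset.univ.filter (fun s => R j ≤ R s)).card < m) with hB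
  rcases B.eq_empty_or_nonempty with h | h
  · simp [h]
  · obtain ⟨j, hj, hmin⟩ := Finset.exists_min_image B R h
    have h1 : B ⊆ Finset.univ.filter (fun s => R j ≤ R s) := fun s hs => by
      simpa using hmin s hs
    have h2 : (Finset.univ.filter (fun s => R j ≤ R s)).card < m := by
      simpa [hB] using hj
    exact (Finset.card_le_card h1).trans h2.le

open Classical in
/-- For uniformly random `j` and `a`, the affine form changes sign on column `j` with probability at
most `4 / k`. -/
theorem sum_card_colActive_le {k r : ℕ} (hk : 0 < k) (hr : k ^ 5 ≤ r)
    (u : Fin k → Fin r → ℝ) (t : ℝ) :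
    (∑ j, (Finset.univ.filter (ColActive u t j)).card : ℝ) ≤ 4 / k * r * 2 ^ (k * r) := by
  -- This `q` makes `centralBinom q / 4 ^ q ≤ 1 / k²`, while the `2 q` heaviest columns are only a
  -- `2 / k` fraction of all.
  set q := k ^ 4 with hq
  have hkR : (0 : ℝ) < k := by exact_mod_cast hk
  set low := Finset.univ.filter (fun j : Fin r =>
    (Finset.univ.filter (fun s => ∑ i, |u i j| ≤ ∑ i, |u i s|)).card < 2 * q) with hlow
  have hlowcard : low.card ≤ 2 * q := card_low_rank_le (fun s => ∑ i, |u i s|) (2 * q)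
  have hcb : (q.centralBinom : ℝ) * k ^ 2 ≤ 4 ^ q := by
    have h := centralBinom_sq_le q
    have h' : (q.centralBinom * k ^ 2) ^ 2 ≤ (4 ^ q) ^ 2 := by
      calc (q.centralBinom * k ^ 2) ^ 2 = q.centralBinom ^ 2 * q := by rw [hq]; ring
        _ ≤ q.centralBinom ^ 2 * (2 * q + 1) := Nat.mul_le_mul_left _ (by omega)
        _ ≤ 16 ^ q := h
        _ = (4 ^ q) ^ 2 := by rw [← pow_mul, mul_comm, pow_mul]; norm_num
    exact_mod_cast (Nat.pow_le_pow_iff_left two_ne_zero).1 h'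
  have hbound : ∀ j, ((Finset.univ.filter (ColActive u t j)).card : ℝ)
      ≤ (if j ∈ low then 2 ^ (k * r) else 0) + 2 / k * 2 ^ (k * r) := by
    intro j
    by_cases hj : j ∈ low
    · have h1 : (Finset.univ.filter (ColActive u t j)).card ≤ 2 ^ (k * r) := by
        refine (Finset.card_le_univ _).trans_eq ?_
        simp [← pow_mul, mul_comm]
      have h2 : ((Finset.univ.filter (ColActive u t j)).card : ℝ) ≤ 2 ^ (k * r) := by
        exact_mod_cast h1
      simp only [hj, if_true]
      have : (0 : ℝ) ≤ 2 / k * 2 ^ (k * r) := by positivity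
      linarith
    · have hrank : 2 * q ≤ (Finset.univ.filter
          (fun s : Fin r => ∑ i, |u i j| ≤ ∑ i, |u i s|)).card := by
        simpa [hlow] using hj
      have h1 := card_colActive_le_of_rank hk u t j hrank
      have h2 : (4 : ℝ) ^ q * ((Finset.univ.filter (ColActive u t j)).card : ℝ)
          ≤ 2 * k * (q.centralBinom * 2 ^ (k * r)) := by exact_mod_cast h1
      simp only [hj, if_false, zero_add]
      refine le_of_mul_le_mul_left ?_ (show (0 : ℝ) < 4 ^ q by positivity)
      refine h2.trans ?_
      calc 2 * (k : ℝ) * (q.centralBinom * 2 ^ (k * r))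
          = (q.centralBinom * k ^ 2) * (2 / k * 2 ^ (k * r)) := by field_simp
        _ ≤ 4 ^ q * (2 / k * 2 ^ (k * r)) := by gcongr
  calc (∑ j, (Finset.univ.filter (ColActive u t j)).card : ℝ)
      ≤ ∑ j : Fin r, ((if j ∈ low then (2 : ℝ) ^ (k * r) else 0) + 2 / k * 2 ^ (k * r)) :=
        Finset.sum_le_sum fun j _ => hbound j
    _ = low.card * 2 ^ (k * r) + r * (2 / k * 2 ^ (k * r)) := by
        rw [Finset.sum_add_distrib]; simp
    _ ≤ (2 * k ^ 4) * 2 ^ (k * r) + r * (2 / k * 2 ^ (k * r)) := by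
        gcongr
        exact_mod_cast hlowcard
    _ ≤ (2 / k * r) * 2 ^ (k * r) + r * (2 / k * 2 ^ (k * r)) := by
        have h5 : (k : ℝ) ^ 5 ≤ r := by exact_mod_cast hr
        have h6 : 2 * (k : ℝ) ^ 4 ≤ 2 / k * r := by
          calc 2 * (k : ℝ) ^ 4 = 2 / k * k ^ 5 := by field_simp
            _ ≤ _ := by gcongr
        exact add_le_add_left (mul_le_mul_of_nonneg_right h6 (by positivity)) _
    _ = _ := by ring
/-! ### Counting threshold functions -/

/-- Sets `{y | f y ≥ 0}` with `f` in the span of `D` functions: such a family has VC dimension at most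
`card D`, since a linear dependence among the evaluations at more points, with a negative
coefficient somewhere, excludes the pattern that picks out its nonnegative coefficients. -/
theorem card_threshold_family_le {Y D : Type*} [Fintype Y] [DecidableEq Y] [Fintype D]
    (h : D → Y → ℝ) (𝒜 : Finset (Finset Y))
    (h𝒜 : ∀ A ∈ 𝒜, ∃ θ : D → ℝ, ∀ y, y ∈ A ↔ 0 ≤ ∑ d, θ d * h d y) :
    𝒜.card ≤ (Fintype.card Y + 1) ^ Fintype.card D := by
  classical
  have hvc : 𝒜.vcDim ≤ Fintype.card D := by
    refine Finset.sup_le fun S hS => ?_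
    rw [Finset.mem_shatterer] at hS
    by_contra! hlt
    have hdep : ¬ LinearIndependent ℝ (fun y : S => (fun d => h d y : D → ℝ)) := by
      intro hli
      have := hli.fintype_card_le_finrank
      simp at this
      omega
    rw [Fintype.not_linearIndependent_iff] at hdep
    obtain ⟨g, hg, y₀, hy₀⟩ := hdep
    obtain ⟨g, hg, y₀, hy₀⟩ : ∃ g : S → ℝ,
        (∑ i, g i • (fun d => h d i : D → ℝ) = 0) ∧ ∃ i, g i < 0 := by
      rcases lt_or_gt_of_ne hy₀ with hneg | hpos
      · exact ⟨g, hg, y₀, hneg⟩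
      · refine ⟨fun i => - g i, ?_, y₀, by simpa using hpos⟩
        simp only [neg_smul, Finset.sum_neg_distrib, hg, neg_zero]
    have hsub :
        (Finset.univ.filter (fun i : S => 0 ≤ g i)).map (Function.Embedding.subtype _) ⊆ S := by
      intro y hy
      simp only [Finset.mem_map, Function.Embedding.subtype_apply] at hy
      obtain ⟨a, _, rfl⟩ := hy
      exact a.2
    obtain ⟨A, hA, hAS⟩ := hS hsub
    obtain ⟨θ, hθ⟩ := h𝒜 A hA
    have hmem : ∀ i : S, (i : Y) ∈ A ↔ 0 ≤ g i := by
      intro i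
      have : (i : Y) ∈ S ∩ A ↔ 0 ≤ g i := by
        rw [hAS]; simp
      simpa using this
    have hzero : ∑ i : S, g i * (∑ d, θ d * h d i) = 0 := by
      have : ∀ d, ∑ i : S, g i * h d i = 0 := by
        intro d
        have := congrFun hg d
        simpa [Finset.sum_apply] using this
      calc ∑ i : S, g i * (∑ d, θ d * h d i) = ∑ d, θ d * ∑ i : S, g i * h d i := by
            simp_rw [Finset.mul_sum]
            rw [Finset.sum_comm]
            refine Finset.sum_congr rfl fun d _ => Finset.sum_congr rfl fun i _ => by ring
        _ = 0 := Finset.sum_eq_zero fun d _ => by rw [this d, mul_zero]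
    have hpos : 0 < ∑ i : S, g i * (∑ d, θ d * h d i) := by
      have key : ∀ i : S, (g i < 0 → (∑ d, θ d * h d i) < 0) := by
        intro i hi
        by_contra! hc
        exact absurd ((hmem i).1 ((hθ i).2 hc)) (not_le.2 hi)
      refine Finset.sum_pos' (fun i _ => ?_) ⟨y₀, Finset.mem_univ _, ?_⟩
      · by_cases hi : 0 ≤ g i
        · exact mul_nonneg hi ((hθ i).1 ((hmem i).2 hi))
        · push Not at hi
          exact (mul_pos_of_neg_of_neg hi (key i hi)).le
      · exact mul_pos_of_neg_of_neg hy₀ (key y₀ hy₀)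
    linarith
  calc 𝒜.card ≤ 𝒜.shatterer.card := Finset.card_le_card_shatterer 𝒜
    _ ≤ ∑ k ∈ Finset.Iic 𝒜.vcDim, (Fintype.card Y).choose k := Finset.card_shatterer_le_sum_vcDim
    _ ≤ ∑ k ∈ Finset.range (Fintype.card D + 1), (Fintype.card Y).choose k := by
        refine Finset.sum_le_sum_of_subset ?_
        intro i hi
        simp only [Finset.mem_Iic, Finset.mem_range] at *
        omega
    _ ≤ (Fintype.card Y + 1) ^ Fintype.card D := by
        rw [add_pow]
        refine Finset.sum_le_sum fun i hi => ?_
        have h1 := Nat.choose_le_pow (Fintype.card Y) i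
        have h2 : 0 < (Fintype.card D).choose i :=
          Nat.choose_pos (by simpa [Nat.lt_succ_iff] using hi)
        simp only [one_pow, mul_one]
        nlinarith [Nat.zero_le ((Fintype.card Y) ^ i)]

open Classical in
/-- The points at which a ReLU gate with linear part `v` and bias `τ` has nonnegative input. -/
noncomputable def gateSet {Y : Type*} [Fintype Y] (v : Y → ℝ) (τ : ℝ) : Finset Y :=
  Finset.univ.filter (fun y => 0 ≤ v y + τ)

open Classical in
/-- The points accepted by the LTF-of-ReLU circuit whose gates have linear parts `v i` and biases
`τ i`. The `v i` are arbitrary functions, as only the dependence on the biases is counted. -/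
noncomputable def netSet {Y : Type*} [Fintype Y] {w : ℕ} (v : Fin w → Y → ℝ) (c₀ : ℝ) (cw : Fin w → ℝ)
    (τ : Fin w → ℝ) : Finset Y :=
  Finset.univ.filter (fun y => 0 ≤ c₀ + ∑ i, cw i * max 0 (v i y + τ i))

/-- A gate pattern is mixed if it is neither constantly off nor constantly on. -/
def Mixed {Y : Type*} [Fintype Y] (P : Finset Y) : Prop := P ≠ ∅ ∧ P ≠ Finset.univ

open Classical in
/-- The number of mixed patterns among those of the `w` gates. -/
noncomputable def numMixed {Y : Type*} [Fintype Y] {w : ℕ} (P : Fin w → Finset Y) : ℕ :=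
  (Finset.univ.filter (fun i => Mixed (P i))).card

open Classical in
/-- All patterns of a gate with linear part `v`, over all biases. -/
noncomputable def gateFamily {Y : Type*} [Fintype Y] (v : Y → ℝ) : Finset (Finset Y) :=
  Finset.univ.filter (fun P => ∃ τ, P = gateSet v τ)

open Classical in
/-- All sets accepted by the circuit, over all biases that produce the gate patterns `P`. -/
noncomputable def netFamily {Y : Type*} [Fintype Y] {w : ℕ} (v : Fin w → Y → ℝ) (c₀ : ℝ)
    (cw : Fin w → ℝ) (P : Fin w → Finset Y) : Finset (Finset Y) :=
  Finset.univ.filter (fun H => ∃ τ, (∀ i, P i = gateSet (v i) (τ i)) ∧ H = netSet v c₀ cw τ)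

theorem card_gateFamily_le {Y : Type*} [Fintype Y] (v : Y → ℝ) :
    (gateFamily v).card ≤ (Fintype.card Y + 1) ^ 2 := by
  classical
  have := card_threshold_family_le (fun (b : Bool) y => if b then v y else 1) (gateFamily v) (by
    intro A hA
    obtain ⟨τ, rfl⟩ := (Finset.mem_filter.1 hA).2
    exact ⟨fun b => if b then 1 else τ, fun y => by simp [gateSet]⟩)
  simpa using this

/-- For given patterns, a gate that is constantly off contributes nothing, the bias of a gate that is
constantly on only changes the constant term, and the bias of a mixed gate `i` multiplies the fixed
function `cw i * 1_{P i}`. So the circuit is a threshold in a space of dimension `numMixed P + 2`. -/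
theorem card_netFamily_le {Y : Type*} [Fintype Y] {w : ℕ} (v : Fin w → Y → ℝ) (c₀ : ℝ)
    (cw : Fin w → ℝ) (P : Fin w → Finset Y) :
    (netFamily v c₀ cw P).card ≤ (Fintype.card Y + 1) ^ (numMixed P + 2) := by
  classical
  let h : Option (Option {i // Mixed (P i)}) → Y → ℝ := fun d y =>
    match d with
    | none => ∑ i, cw i * if y ∈ P i then v i y else 0
    | some none => 1
    | some (some i) => cw i * if y ∈ P i then 1 else 0
  have := card_threshold_family_le h (netFamily v c₀ cw P) (by
    intro A hA
    obtain ⟨τ, hP, rfl⟩ := (Finset.mem_filter.1 hA).2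
    refine ⟨fun d => match d with
      | none => 1
      | some none => c₀ + ∑ i, if P i = Finset.univ then cw i * τ i else 0
      | some (some i) => τ i, fun y => ?_⟩
    simp only [netSet, Finset.mem_filter, Finset.mem_univ, true_and, Fintype.sum_option, h]
    rw [iff_iff_eq]
    congr 1
    have hsub : ∑ i : {i // Mixed (P i)}, τ i * (cw i * if y ∈ P i then 1 else 0)
        = ∑ i, if Mixed (P i) then τ i * (cw i * if y ∈ P i then 1 else 0) else 0 := by
      rw [← Finset.sum_filter]
      exact (Finset.sum_subtype (Finset.univ.filter fun i => Mixed (P i)) (by simp)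
        (fun i => τ i * (cw i * if y ∈ P i then 1 else 0))).symm
    rw [hsub]
    have hterm : ∀ i, cw i * max 0 (v i y + τ i) =
        (cw i * if y ∈ P i then v i y else 0) + (if P i = Finset.univ then cw i * τ i else 0)
        + if Mixed (P i) then τ i * (cw i * if y ∈ P i then 1 else 0) else 0 := by
      intro i
      have hmem : y ∈ P i ↔ 0 ≤ v i y + τ i := by rw [hP i]; simp [gateSet]
      by_cases hy : y ∈ P i
      · have hne : P i ≠ ∅ := fun h => by simp [h] at hy
        rw [max_eq_right (hmem.1 hy)]
        by_cases hu : P i = Finset.univ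
        · have : ¬ Mixed (P i) := fun h => h.2 hu
          rw [if_neg this, if_pos hy, if_pos hu]; ring
        · have : Mixed (P i) := ⟨hne, hu⟩
          rw [if_pos this, if_pos hy, if_neg hu, if_pos hy]; ring
      · have hu : P i ≠ Finset.univ := fun h => by simp [h] at hy
        rw [max_eq_left (not_le.1 (fun h => hy (hmem.2 h))).le]
        simp [hy, hu]
    simp only [hterm, Finset.sum_add_distrib]
    ring)
  have hcard : Fintype.card (Option (Option {i // Mixed (P i)})) = numMixed P + 2 := by
    simp [numMixed, Fintype.card_subtype]
  rwa [hcard] at this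

/-! ### The weighted union bound -/

/-- The `±1` encoding of a Boolean value. -/
noncomputable def pm (b : Bool) : ℝ := if b then 1 else -1

/-- A fixed function `f` has a subgaussian correlation with the bits of a uniformly random `x` read at
distinct positions `idx y`. -/
theorem sum_exp_corr_le {Y : Type*} [Fintype Y] {M : ℕ} (idx : Y → Fin M)
    (hidx : Function.Injective idx) (f : Y → Bool) (l : ℝ) :
    ∑ x : Fin M → Bool, Real.exp (l * ∑ y, pm (x (idx y)) * pm (f y))
      ≤ 2 ^ M * Real.exp (l ^ 2 * Fintype.card Y / 2) := by
  classical
  set F : Fin M → ℝ := Function.extend idx (fun y => pm (f y)) 0 with hF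
  have hsum : ∀ u : Fin M → ℝ → ℝ, (∀ m, u m 0 = 0) →
      ∑ m, u m (F m) = ∑ y, u (idx y) (pm (f y)) := by
    intro u hu
    symm
    refine Finset.sum_of_injOn idx (fun a _ b _ h => hidx h) (by simp) ?_ ?_
    · intro m _ hm
      rw [hF, Function.extend_apply']
      · exact hu m
      · rintro ⟨y, rfl⟩
        exact hm (by simp)
    · intro y _
      rw [hF, hidx.extend_apply]
  have h1 : ∀ x : Fin M → Bool, Real.exp (l * ∑ y, pm (x (idx y)) * pm (f y))
      = ∏ m, Real.exp (l * (pm (x m) * F m)) := by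
    intro x
    rw [← Real.exp_sum, ← Finset.mul_sum, hsum (fun m t => pm (x m) * t) (by simp)]
  simp_rw [h1]
  rw [← Fintype.prod_sum (fun m b => Real.exp (l * (pm b * F m)))]
  calc ∏ m, ∑ b : Bool, Real.exp (l * (pm b * F m))
      ≤ ∏ m : Fin M, 2 * Real.exp ((l * F m) ^ 2 / 2) := by
        refine Finset.prod_le_prod (fun m _ => Finset.sum_nonneg fun _ _ => (Real.exp_pos _).le) ?_
        intro m _
        have := Real.cosh_le_exp_half_sq (l * F m)
        rw [Real.cosh_eq] at this
        simp only [Fintype.sum_bool, pm]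
        simp only [if_true, one_mul, Bool.false_eq_true, if_false, neg_one_mul, mul_neg]
        linarith
    _ = 2 ^ M * Real.exp (l ^ 2 * Fintype.card Y / 2) := by
        rw [Finset.prod_mul_distrib, ← Real.exp_sum]
        simp only [Finset.prod_const, Finset.card_univ, Fintype.card_fin]
        rw [hsum (fun m t => (l * t) ^ 2 / 2) (by simp)]
        congr 2
        have : ∀ y, (l * pm (f y)) ^ 2 / 2 = l ^ 2 / 2 := by
          intro y; cases f y <;> simp [pm]
        simp [this]; ring

open Classical in
/-- The prior weight of a gate pattern; the weights of the patterns of one gate add up to at most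
`1`. -/
noncomputable def patWeight {Y : Type*} [Fintype Y] (P : Finset Y) : ℝ :=
  1 / 4 * if Mixed P then (((Fintype.card Y : ℝ) + 1) ^ 2)⁻¹ else 1

theorem patWeight_nonneg {Y : Type*} [Fintype Y] (P : Finset Y) : 0 ≤ patWeight P := by
  unfold patWeight
  split_ifs <;> positivity

theorem sum_patWeight_le {Y : Type*} [Fintype Y] (v : Y → ℝ) :
    ∑ P ∈ gateFamily v, patWeight P ≤ 1 := by
  classical
  have h1 : ∀ P : Finset Y, patWeight P ≤ 1 / 4 * (((Fintype.card Y : ℝ) + 1) ^ 2)⁻¹ +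
      ((if P = ∅ then 1 / 4 else 0) + if P = Finset.univ then 1 / 4 else 0) := by
    intro P
    have h0 : (0 : ℝ) ≤ (((Fintype.card Y : ℝ) + 1) ^ 2)⁻¹ := by positivity
    unfold patWeight Mixed
    by_cases ha : P = ∅ <;> by_cases hb : P = Finset.univ <;>
      simp only [ha, hb, ne_eq, not_true_eq_false, not_false_eq_true, and_true, and_false,
        false_and, if_true, if_false] <;> (try split_ifs) <;> linarith
  have h2 : ∀ Q : Finset Y, ∑ P ∈ gateFamily v, (if P = Q then (1 / 4 : ℝ) else 0) ≤ 1 / 4 := by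
    intro Q
    rw [Finset.sum_ite_eq']
    split_ifs <;> norm_num
  calc ∑ P ∈ gateFamily v, patWeight P
      ≤ ∑ P ∈ gateFamily v, (1 / 4 * (((Fintype.card Y : ℝ) + 1) ^ 2)⁻¹ +
      ((if P = ∅ then 1 / 4 else 0) + if P = Finset.univ then 1 / 4 else 0)) :=
        Finset.sum_le_sum fun P _ => h1 P
    _ ≤ (gateFamily v).card * (1 / 4 * (((Fintype.card Y : ℝ) + 1) ^ 2)⁻¹) + (1 / 4 + 1 / 4) := by
        rw [Finset.sum_add_distrib, Finset.sum_add_distrib, Finset.sum_const, nsmul_eq_mul]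
        exact add_le_add le_rfl (add_le_add (h2 _) (h2 _))
    _ ≤ ((Fintype.card Y : ℝ) + 1) ^ 2 * (1 / 4 * (((Fintype.card Y : ℝ) + 1) ^ 2)⁻¹)
        + (1 / 4 + 1 / 4) := by
        gcongr
        exact_mod_cast card_gateFamily_le v
    _ ≤ 1 := by
        have : ((Fintype.card Y : ℝ) + 1) ^ 2 ≠ 0 := by positivity
        field_simp
        norm_num

theorem prod_patWeight {Y : Type*} [Fintype Y] {w : ℕ} (P : Fin w → Finset Y) :
    ∏ i, patWeight (P i) =
      Real.exp (-(w * Real.log 4 + 2 * numMixed P * Real.log (Fintype.card Y + 1))) := by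
  classical
  have hN : (0 : ℝ) < (Fintype.card Y : ℝ) + 1 := by positivity
  unfold patWeight
  rw [Finset.prod_mul_distrib, Finset.prod_ite, Finset.prod_const, Finset.prod_const,
    Finset.prod_const_one, mul_one, neg_add, Real.exp_add]
  congr 1
  · rw [← mul_neg, Real.exp_nat_mul, Real.exp_neg, Real.exp_log (by norm_num)]
    simp
  · rw [show -(2 * (numMixed P : ℝ) * Real.log (Fintype.card Y + 1))
      = (numMixed P : ℝ) * (-((2 : ℕ) * Real.log (Fintype.card Y + 1))) by push_cast; ring,
      Real.exp_nat_mul, Real.exp_neg, Real.exp_nat_mul, Real.exp_log hN]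
    rfl

open Classical in
/-- The correlation on `Y` between the bits of `x` at the positions `idx y` and the set `H`. -/
noncomputable def corr {Y : Type*} [Fintype Y] {M : ℕ} (idx : Y → Fin M) (x : Fin M → Bool)
    (H : Finset Y) : ℝ := ∑ y, pm (x (idx y)) * pm (decide (y ∈ H))

/-- For every `x` the exponential of the summand is one term of a sum, over all gate patterns and
accepted sets, of prior weight times `exp (l * correlation - l² N / 2)`. The average over `x` of
that sum is at most `1`, and `t ≤ exp t - 1` passes from the exponential to the summand. -/
theorem sum_corr_le {Y : Type*} [Fintype Y] {M w : ℕ} (idx : Y → Fin M)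
    (hidx : Function.Injective idx) (v : Fin w → Y → ℝ) (c₀ : ℝ) (cw : Fin w → ℝ)
    (τ : (Fin M → Bool) → Fin w → ℝ) (l : ℝ) :
    ∑ x : Fin M → Bool, (l * corr idx x (netSet v c₀ cw (τ x))
      - (w * Real.log 4 + (3 * numMixed (fun i => gateSet (v i) (τ x i)) + 2)
          * Real.log (Fintype.card Y + 1)) - l ^ 2 * Fintype.card Y / 2) ≤ 0 := by
  classical
  set N : ℝ := (Fintype.card Y : ℝ) with hN
  have hN1 : 0 < N + 1 := by positivity
  set E : ℝ := l ^ 2 * N / 2 with hE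
  let term : (Fin w → Finset Y) → Finset Y → (Fin M → Bool) → ℝ := fun P H x =>
    (∏ i, patWeight (P i)) * ((((N + 1) ^ (numMixed P + 2))⁻¹) * Real.exp (l * corr idx x H - E))
  have hterm0 : ∀ P H x, 0 ≤ term P H x := fun P H x =>
    mul_nonneg (Finset.prod_nonneg fun i _ => patWeight_nonneg _) (by positivity)
  have hpt : ∀ x, Real.exp (l * corr idx x (netSet v c₀ cw (τ x))
      - (w * Real.log 4 + (3 * numMixed (fun i => gateSet (v i) (τ x i)) + 2)
        * Real.log (N + 1)) - E)
      ≤ ∑ P ∈ Fintype.piFinset (fun i => gateFamily (v i)),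
        ∑ H ∈ netFamily v c₀ cw P, term P H x := by
    intro x
    set P : Fin w → Finset Y := fun i => gateSet (v i) (τ x i) with hP
    have h1 : P ∈ Fintype.piFinset (fun i => gateFamily (v i)) := by
      rw [Fintype.mem_piFinset]
      intro i
      exact Finset.mem_filter.2 ⟨Finset.mem_univ _, _, rfl⟩
    have h2 : netSet v c₀ cw (τ x) ∈ netFamily v c₀ cw P :=
      Finset.mem_filter.2 ⟨Finset.mem_univ _, τ x, fun i => rfl, rfl⟩
    calc _ = term P (netSet v c₀ cw (τ x)) x := by
          have : ((N + 1) ^ (numMixed P + 2))⁻¹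
              = Real.exp (-((numMixed P + 2 : ℕ) * Real.log (N + 1))) := by
            rw [Real.exp_neg, Real.exp_nat_mul, Real.exp_log hN1]
          simp only [term]
          rw [this, prod_patWeight, ← Real.exp_add, ← Real.exp_add]
          congr 1
          push_cast
          ring
      _ ≤ ∑ H ∈ netFamily v c₀ cw P, term P H x :=
          Finset.single_le_sum (f := fun H => term P H x) (fun H _ => hterm0 P H x) h2
      _ ≤ _ := Finset.single_le_sum (f := fun P => ∑ H ∈ netFamily v c₀ cw P, term P H x)
          (fun P _ => Finset.sum_nonneg fun H _ => hterm0 P H x) h1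
  have hinner : ∀ P H, ∑ x, term P H x
      ≤ (∏ i, patWeight (P i)) * (((N + 1) ^ (numMixed P + 2))⁻¹ * 2 ^ M) := by
    intro P H
    simp only [term]
    rw [← Finset.mul_sum, ← Finset.mul_sum]
    refine mul_le_mul_of_nonneg_left (mul_le_mul_of_nonneg_left ?_ (by positivity))
      (Finset.prod_nonneg fun i _ => patWeight_nonneg _)
    simp_rw [Real.exp_sub]
    rw [← Finset.sum_div, div_le_iff₀ (Real.exp_pos _)]
    exact sum_exp_corr_le idx hidx (fun y => decide (y ∈ H)) l
  have htotal : ∑ x : Fin M → Bool, Real.exp (l * corr idx x (netSet v c₀ cw (τ x))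
      - (w * Real.log 4 + (3 * numMixed (fun i => gateSet (v i) (τ x i)) + 2)
        * Real.log (N + 1)) - E)
      ≤ 2 ^ M := by
    calc _ ≤ ∑ x : Fin M → Bool, ∑ P ∈ Fintype.piFinset (fun i => gateFamily (v i)),
          ∑ H ∈ netFamily v c₀ cw P, term P H x := Finset.sum_le_sum fun x _ => hpt x
      _ = ∑ P ∈ Fintype.piFinset (fun i => gateFamily (v i)),
          ∑ H ∈ netFamily v c₀ cw P, ∑ x, term P H x := by
          rw [Finset.sum_comm]
          refine Finset.sum_congr rfl fun P _ => Finset.sum_comm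
      _ ≤ ∑ P ∈ Fintype.piFinset (fun i => gateFamily (v i)), (∏ i, patWeight (P i)) * 2 ^ M := by
          refine Finset.sum_le_sum fun P _ => ?_
          refine (Finset.sum_le_sum fun H _ => hinner P H).trans ?_
          rw [Finset.sum_const, nsmul_eq_mul]
          have hc : ((netFamily v c₀ cw P).card : ℝ) ≤ (N + 1) ^ (numMixed P + 2) := by
            rw [hN]
            exact_mod_cast card_netFamily_le v c₀ cw P
          calc ((netFamily v c₀ cw P).card : ℝ) *
                ((∏ i, patWeight (P i)) * (((N + 1) ^ (numMixed P + 2))⁻¹ * 2 ^ M))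
              ≤ (N + 1) ^ (numMixed P + 2) *
                ((∏ i, patWeight (P i)) * (((N + 1) ^ (numMixed P + 2))⁻¹ * 2 ^ M)) := by
                refine mul_le_mul_of_nonneg_right hc ?_
                exact mul_nonneg (Finset.prod_nonneg fun i _ => patWeight_nonneg _) (by positivity)
            _ = _ := by
                have : (N + 1) ^ (numMixed P + 2) ≠ 0 := by positivity
                field_simp
      _ = (∏ i, ∑ P ∈ gateFamily (v i), patWeight P) * 2 ^ M := by
          rw [← Finset.sum_mul, Finset.prod_univ_sum]
      _ ≤ 1 * 2 ^ M := by
          refine mul_le_mul_of_nonneg_right ?_ (by positivity)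
          exact Finset.prod_le_one (fun i _ => Finset.sum_nonneg fun P _ => patWeight_nonneg P)
            (fun i _ => sum_patWeight_le (v i))
      _ = 2 ^ M := one_mul _
  calc _ ≤ ∑ x : Fin M → Bool, (Real.exp (l * corr idx x (netSet v c₀ cw (τ x))
      - (w * Real.log 4 + (3 * numMixed (fun i => gateSet (v i) (τ x i)) + 2)
        * Real.log (N + 1)) - E)
        - 1) := Finset.sum_le_sum fun x _ => by
          have := Real.add_one_le_exp (l * corr idx x (netSet v c₀ cw (τ x))
            - (w * Real.log 4 + (3 * numMixed (fun i => gateSet (v i) (τ x i)) + 2)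
              * Real.log (N + 1)) - E)
          linarith
    _ ≤ 0 := by
        rw [Finset.sum_sub_distrib]
        have : ∑ x : Fin M → Bool, (1 : ℝ) = 2 ^ M := by simp
        rw [this]
        linarith
/-! ### The address of the Andreev function -/

theorem binSum_lt (k : ℕ) (β : Fin k → Prop) [DecidablePred β] :
    (∑ i : Fin k, if β i then 2 ^ (k - 1 - (i : ℕ)) else 0) < 2 ^ k := by
  induction k with
  | zero => simp
  | succ k ih =>
    rw [Fin.sum_univ_succ]
    have h := ih (fun i => β i.succ)
    have e : ∀ i : Fin k, k - ((i.succ : Fin (k + 1)) : ℕ) = k - 1 - (i : ℕ) := by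
      intro i; simp only [Fin.val_succ]; omega
    simp only [Fin.val_zero, Nat.sub_zero, Nat.add_sub_cancel, e]
    rw [pow_succ]
    split_ifs <;> omega

theorem binSum_injective (k : ℕ) (β γ : Fin k → Prop) [DecidablePred β] [DecidablePred γ]
    (h : (∑ i : Fin k, if β i then 2 ^ (k - 1 - (i : ℕ)) else 0) =
      ∑ i : Fin k, if γ i then 2 ^ (k - 1 - (i : ℕ)) else 0) (i : Fin k) : β i ↔ γ i := by
  induction k with
  | zero => exact i.elim0
  | succ k ih =>
    rw [Fin.sum_univ_succ, Fin.sum_univ_succ] at h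
    have hβ := binSum_lt k (fun i => β i.succ)
    have hγ := binSum_lt k (fun i => γ i.succ)
    have e : ∀ i : Fin k, k - ((i.succ : Fin (k + 1)) : ℕ) = k - 1 - (i : ℕ) := by
      intro i; simp only [Fin.val_succ]; omega
    simp only [Fin.val_zero, Nat.sub_zero, Nat.add_sub_cancel, e] at h
    have h0 : β 0 ↔ γ 0 := by
      by_cases h1 : β 0 <;> by_cases h2 : γ 0 <;>
        simp only [h1, h2, if_true, if_false] at h ⊢ <;> omega
    refine Fin.cases h0 (fun j => ?_) i
    refine ih (fun i => β i.succ) (fun i => γ i.succ) ?_ j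
    by_cases h1 : β 0 <;> simp only [← h0, h1, if_true, if_false] at h <;> omega
/-- The address read by the Andreev function: the row parities of `a` as a binary number. -/
def binOf (n : ℕ) (a : Fin (andreevK n) → Fin (andreevR n) → Bool) : ℕ :=
  ∑ i : Fin (andreevK n),
    if (∑ j : Fin (andreevR n), if a i j then 1 else 0) % 2 = 1
      then 2 ^ (andreevK n - 1 - (i : ℕ)) else 0

theorem binOf_lt (n : ℕ) (hM : andreevM n ≠ 0) (a : Fin (andreevK n) → Fin (andreevR n) → Bool) :
    binOf n a < andreevM n :=
  (binSum_lt _ _).trans_le (Nat.pow_log_le_self 2 hM)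

theorem andreev_iff (n : ℕ) (hM : andreevM n ≠ 0) (x : Fin (andreevM n) → Bool)
    (a : Fin (andreevK n) → Fin (andreevR n) → Bool) :
    andreev n x a ↔ x ⟨binOf n a, binOf_lt n hM a⟩ = true := by
  have h := binOf_lt n hM a
  unfold binOf at h
  unfold andreev
  simp only [h, dite_true]
  rfl

theorem binOf_colUpd_injective (n : ℕ) (a : Fin (andreevK n) → Fin (andreevR n) → Bool)
    (j : Fin (andreevR n)) : Function.Injective (fun y => binOf n (colUpd a j y)) := by
  intro y y' h
  funext i
  have h1 := binSum_injective _ _ _ h i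
  have hs : ∀ y : Fin (andreevK n) → Bool,
      (∑ s : Fin (andreevR n), if colUpd a j y i s then 1 else 0)
        = (if y i then 1 else 0) + ∑ s ∈ Finset.univ.erase j, if a i s then 1 else 0 := by
    intro y
    rw [← Finset.add_sum_erase _ _ (Finset.mem_univ j)]
    congr 1
    · simp [colUpd]
    · refine Finset.sum_congr rfl fun s hs => ?_
      simp [colUpd, Finset.ne_of_mem_erase hs]
  rw [hs y, hs y'] at h1
  cases hy : y i <;> cases hy' : y' i <;>
    simp only [hy, hy', if_true, if_false, Bool.false_eq_true] at h1 ⊢ <;> omega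

/-! ### The bound on the advantage -/

/-- Replacing one column of a uniform matrix by a uniform vector leaves it uniform. -/
theorem sum_colUpd {k r : ℕ} (j : Fin r) (f : (Fin k → Fin r → Bool) → ℝ) :
    ∑ a, ∑ y, f (colUpd a j y) = 2 ^ k * ∑ a, f a := by
  have h : ∑ p : (Fin k → Fin r → Bool) × (Fin k → Bool), f (colUpd p.1 j p.2)
      = ∑ p : (Fin k → Fin r → Bool) × (Fin k → Bool), f p.1 := by
    refine Finset.sum_nbij' (fun p => (colUpd p.1 j p.2, fun i => p.1 i j))
      (fun p => (colUpd p.1 j p.2, fun i => p.1 i j)) (by simp) (by simp) ?_ ?_ (by simp)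
    all_goals
      rintro ⟨a, y⟩ _
      refine Prod.ext ?_ ?_
      · funext i s
        by_cases hs : s = j <;> simp [colUpd, hs]
      · funext i
        simp [colUpd]
  rw [Fintype.sum_prod_type, Fintype.sum_prod_type] at h
  rw [h, Finset.mul_sum]
  refine Finset.sum_congr rfl fun a _ => ?_
  simp

theorem aff_colUpd {k r : ℕ} (u : Fin k → Fin r → ℝ) (t : ℝ) (j : Fin r)
    (a : Fin k → Fin r → Bool) (y : Fin k → Bool) :
    aff u t (colUpd a j y) = ∑ i, u i j * zo (y i) + aff u t (colUpd a j fun _ => false) := by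
  unfold aff
  rw [← add_assoc, ← Finset.sum_add_distrib]
  congr 1
  refine Finset.sum_congr rfl fun i _ => ?_
  rw [← Finset.add_sum_erase _ _ (Finset.mem_univ j),
    ← Finset.add_sum_erase (a := j) Finset.univ
      (fun s => u i s * zo (colUpd a j (fun _ => false) i s)) (Finset.mem_univ j)]
  have : ∑ s ∈ Finset.univ.erase j, u i s * zo (colUpd a j y i s)
      = ∑ s ∈ Finset.univ.erase j, u i s * zo (colUpd a j (fun _ => false) i s) := by
    refine Finset.sum_congr rfl fun s hs => ?_
    simp [colUpd, Finset.ne_of_mem_erase hs]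
  rw [this]
  simp [colUpd, zo]

theorem mixed_gateSet_iff {k r : ℕ} (u : Fin k → Fin r → ℝ) (t : ℝ) (j : Fin r)
    (a : Fin k → Fin r → Bool) :
    Mixed (gateSet (fun y : Fin k → Bool => ∑ i, u i j * zo (y i))
      (aff u t (colUpd a j fun _ => false))) ↔ ColActive u t j a := by
  unfold Mixed ColActive gateSet
  simp only [← aff_colUpd, ← Finset.nonempty_iff_ne_empty, Finset.filter_nonempty_iff,
    Finset.mem_univ, true_and, ne_eq, Finset.filter_eq_self, not_forall, not_le, exists_prop]

open Classical in
/-- The bound for any function `x (adr a)` whose address is injective in each column of `a`. -/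
theorem advantage_bound {M k r : ℕ} (hk : 0 < k) (hr : k ^ 5 ≤ r)
    (adr : (Fin k → Fin r → Bool) → Fin M)
    (hadr : ∀ j a, Function.Injective (fun y => adr (colUpd a j y)))
    (ε : ℝ) (hε : 0 ≤ ε) (w : ℕ) (wx : Fin w → Fin M → ℝ) (wa : Fin w → Fin k → Fin r → ℝ)
    (bias : Fin w → ℝ) (c₀ : ℝ) (cw : Fin w → ℝ)
    (h : ((1 / 2 + ε) * 2 ^ (M + k * r) : ℝ) ≤
      (Finset.univ.filter (fun p : (Fin M → Bool) × (Fin k → Fin r → Bool) =>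
        ((0 ≤ c₀ + ∑ i, cw i * max 0 ((∑ j, wx i j * zo (p.1 j)) +
            (∑ q, ∑ s, wa i q s * zo (p.2 q s)) + bias i)) ↔ p.1 (adr p.2) = true))).card) :
    2 * ε ^ 2 * 2 ^ k ≤ 26 * w + 4 * k := by
  have hkR : (1 : ℝ) ≤ k := by exact_mod_cast hk
  have hr0 : 0 < r := lt_of_lt_of_le (by positivity) hr
  have hrR : (0 : ℝ) < r := by exact_mod_cast hr0
  let t : (Fin M → Bool) → Fin w → ℝ := fun x i => (∑ j, wx i j * zo (x j)) + bias i
  let F : (Fin M → Bool) → (Fin k → Fin r → Bool) → Prop := fun x a =>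
    0 ≤ c₀ + ∑ i, cw i * max 0 (aff (wa i) (t x i) a)
  let agr : (Fin M → Bool) → (Fin k → Fin r → Bool) → ℝ := fun x a =>
    if (F x a ↔ x (adr a) = true) then 1 else -1
  set W : ℝ := 2 ^ M * 2 ^ (k * r) with hW
  have hWpos : 0 < W := by positivity
  set S : ℝ := ∑ x, ∑ a, agr x a with hS
  have hScard : 2 * ε * W ≤ S := by
    have hF : ∀ x a, (0 ≤ c₀ + ∑ i, cw i * max 0 ((∑ j, wx i j * zo (x j)) +
                   (∑ q, ∑ s, wa i q s * zo (a q s)) + bias i)) ↔ F x a := by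
      intro x a
      have : ∀ i, (∑ j, wx i j * zo (x j)) + (∑ q, ∑ s, wa i q s * zo (a q s)) + bias i
          = aff (wa i) (t x i) a := by
        intro i; simp only [aff, t]; ring
      simp only [this, F]
    simp only [hF] at h
    have h2 : S = 2 * (Finset.univ.filter (fun p : (Fin M → Bool) × (Fin k → Fin r → Bool) =>
        (F p.1 p.2 ↔ p.1 (adr p.2) = true))).card - W := by
      have e : ∀ p : (Fin M → Bool) × (Fin k → Fin r → Bool), agr p.1 p.2
          = 2 * (if (F p.1 p.2 ↔ p.1 (adr p.2) = true) then 1 else 0) - 1 := by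
        intro p
        simp only [agr]
        split_ifs <;> norm_num
      rw [hS, ← Fintype.sum_prod_type']
      rw [Finset.sum_congr rfl fun p _ => e p, Finset.sum_sub_distrib, ← Finset.mul_sum,
        Finset.sum_boole]
      congr 1
      simp [hW, ← pow_mul, mul_comm]
    rw [pow_add, ← hW] at h
    linarith
  -- The circuit restricted to column `j`: the gate inputs are `v j i y + τ j a x i`, and `s j a x` of
  -- the gates are mixed.
  let v : Fin r → Fin w → (Fin k → Bool) → ℝ := fun j i y => ∑ q, wa i q j * zo (y q)
  let τ : Fin r → (Fin k → Fin r → Bool) → (Fin M → Bool) → Fin w → ℝ := fun j a x i =>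
    aff (wa i) (t x i) (colUpd a j fun _ => false)
  let idx : Fin r → (Fin k → Fin r → Bool) → (Fin k → Bool) → Fin M := fun j a y =>
    adr (colUpd a j y)
  have hidx : ∀ j a, Function.Injective (idx j a) := hadr
  let s : Fin r → (Fin k → Fin r → Bool) → (Fin M → Bool) → ℕ := fun j a x =>
    numMixed (fun i => gateSet (v j i) (τ j a x i))
  have hcorr : ∀ j a x, corr (idx j a) x (netSet (v j) c₀ cw (τ j a x))
      = ∑ y, agr x (colUpd a j y) := by
    intro j a x
    refine Finset.sum_congr rfl fun y _ => ?_
    have h1 : y ∈ netSet (v j) c₀ cw (τ j a x) ↔ F x (colUpd a j y) := by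
      simp only [netSet, Finset.mem_filter, Finset.mem_univ, true_and, F,
        aff_colUpd _ _ j a y, v, τ]
    simp only [agr, h1, idx]
    by_cases hF : F x (colUpd a j y) <;> cases hx : x (adr (colUpd a j y)) <;> simp [pm, hF]
  have hcore : ∀ j a, ∑ x, (2 * ε * corr (idx j a) x (netSet (v j) c₀ cw (τ j a x))
      - (w * Real.log 4 + (3 * s j a x + 2) * Real.log ((2 : ℝ) ^ k + 1))
      - (2 * ε) ^ 2 * 2 ^ k / 2) ≤ 0 := by
    intro j a
    have := sum_corr_le (idx j a) (hidx j a) (v j) c₀ cw (τ j a) (2 * ε)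
    simpa using this
  set Λ : ℝ := Real.log ((2 : ℝ) ^ k + 1) with hΛ
  have hΛ0 : 0 ≤ Λ := Real.log_nonneg (by
    have : (0 : ℝ) ≤ 2 ^ k := by positivity
    linarith)
  have hcorrsum : ∑ j, ∑ a, ∑ x, corr (idx j a) x (netSet (v j) c₀ cw (τ j a x))
      = r * (2 ^ k * S) := by
    have : ∀ j, ∑ a, ∑ x, corr (idx j a) x (netSet (v j) c₀ cw (τ j a x)) = 2 ^ k * S := by
      intro j
      simp only [hcorr]
      rw [Finset.sum_comm, hS, Finset.mul_sum]
      exact Finset.sum_congr rfl fun x _ => sum_colUpd j (agr x)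
    simp [this]
  have hssum : ∑ j, ∑ a, ∑ x, (s j a x : ℝ) ≤ 4 / k * w * (r * W) := by
    have hs : ∀ j a x, (s j a x : ℝ) = ∑ i, if ColActive (wa i) (t x i) j a then 1 else 0 := by
      intro j a x
      simp only [s, numMixed, v, τ, mixed_gateSet_iff, Finset.sum_boole]
    have hx : ∀ x i, ∑ j, ∑ a, (if ColActive (wa i) (t x i) j a then (1 : ℝ) else 0)
        ≤ 4 / k * r * 2 ^ (k * r) := by
      intro x i
      have := sum_card_colActive_le hk hr (wa i) (t x i)
      simpa only [Finset.sum_boole] using this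
    calc ∑ j, ∑ a, ∑ x, (s j a x : ℝ)
        = ∑ x, ∑ i, ∑ j, ∑ a, (if ColActive (wa i) (t x i) j a then (1 : ℝ) else 0) := by
          simp only [hs]
          rw [Finset.sum_congr rfl fun j _ => Finset.sum_comm, Finset.sum_comm]
          refine Finset.sum_congr rfl fun x _ => ?_
          rw [Finset.sum_congr rfl fun j _ => Finset.sum_comm, Finset.sum_comm]
      _ ≤ ∑ x : Fin M → Bool, ∑ i : Fin w, 4 / (k : ℝ) * r * 2 ^ (k * r) :=
          Finset.sum_le_sum fun x _ => Finset.sum_le_sum fun i _ => hx x i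
      _ = _ := by
          simp [hW]; ring
  have hsum : ∑ j, ∑ a, ∑ x, (2 * ε * corr (idx j a) x (netSet (v j) c₀ cw (τ j a x))
      - (w * Real.log 4 + (3 * s j a x + 2) * Λ)
      - (2 * ε) ^ 2 * 2 ^ k / 2) ≤ 0 :=
    Finset.sum_nonpos fun j _ => Finset.sum_nonpos fun a _ => hcore j a
  have hexp : ∑ j, ∑ a, ∑ x, (2 * ε * corr (idx j a) x (netSet (v j) c₀ cw (τ j a x))
      - (w * Real.log 4 + (3 * s j a x + 2) * Λ)
      - (2 * ε) ^ 2 * 2 ^ k / 2)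
      = 2 * ε * (∑ j, ∑ a, ∑ x, corr (idx j a) x (netSet (v j) c₀ cw (τ j a x)))
        - 3 * Λ * (∑ j, ∑ a, ∑ x, (s j a x : ℝ))
        - (r * W) * (w * Real.log 4 + 2 * Λ + (2 * ε) ^ 2 * 2 ^ k / 2) := by
    have hconst : ∑ j : Fin r, ∑ a : Fin k → Fin r → Bool, ∑ x : Fin M → Bool,
        (w * Real.log 4 + 2 * Λ + (2 * ε) ^ 2 * 2 ^ k / 2)
        = (r * W) * (w * Real.log 4 + 2 * Λ + (2 * ε) ^ 2 * 2 ^ k / 2) := by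
      simp only [Finset.sum_const, Finset.card_univ, nsmul_eq_mul, Fintype.card_fin,
        Fintype.card_fun, Fintype.card_bool, hW]
      push_cast
      rw [← pow_mul, mul_comm r k]
      ring
    rw [← hconst]
    simp only [Finset.mul_sum, ← Finset.sum_sub_distrib]
    refine Finset.sum_congr rfl fun j _ => Finset.sum_congr rfl fun a _ =>
      Finset.sum_congr rfl fun x _ => by ring
  rw [hexp, hcorrsum] at hsum
  have h1 : (r * W) * (2 * ε * (2 ^ k * (2 * ε))) ≤ 2 * ε * (r * (2 ^ k * S)) := by
    calc (r * W) * (2 * ε * (2 ^ k * (2 * ε))) = (2 * ε * r * 2 ^ k) * (2 * ε * W) := by ring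
      _ ≤ (2 * ε * r * 2 ^ k) * S := by gcongr
      _ = _ := by ring
  have h2 : 3 * Λ * (∑ j, ∑ a, ∑ x, (s j a x : ℝ)) ≤ 3 * Λ * (4 / k * w * (r * W)) :=
    mul_le_mul_of_nonneg_left hssum (by positivity)
  have h3 : (r * W) * (2 * ε * (2 ^ k * (2 * ε))) ≤
      (r * W) * (3 * Λ * (4 / k * w) + (w * Real.log 4 + 2 * Λ + (2 * ε) ^ 2 * 2 ^ k / 2)) := by
    nlinarith
  have h4 := le_of_mul_le_mul_left h3 (mul_pos hrR hWpos)
  have hl2 : Real.log 2 ≤ 1 := by linarith [Real.log_two_lt_d9]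
  have hl4 : Real.log 4 ≤ 2 := by
    rw [show (4 : ℝ) = 2 ^ 2 by norm_num, Real.log_pow]
    push_cast
    linarith
  have hΛk : Λ ≤ 2 * k := by
    have h5 : Λ ≤ Real.log (2 ^ (k + 1)) := by
      refine Real.log_le_log (by positivity) ?_
      have : (1 : ℝ) ≤ 2 ^ k := one_le_pow₀ (by norm_num)
      rw [pow_succ]
      linarith
    rw [Real.log_pow] at h5
    push_cast at h5
    nlinarith [Real.log_nonneg (show (1 : ℝ) ≤ 2 by norm_num)]
  have h6 : 3 * Λ * (4 / k * w) ≤ 24 * w := by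
    calc 3 * Λ * (4 / k * w) ≤ 3 * (2 * k) * (4 / k * w) := by gcongr
      _ = 24 * w := by field_simp; ring
  have h7 : w * Real.log 4 ≤ w * 2 := mul_le_mul_of_nonneg_left hl4 (by positivity)
  nlinarith

open Classical in
/-- almost linear lower bounds on the size of weight-unrestricted
LTF-of-ReLU circuits that match the Andreev function on a `(1/2 + ε)`-fraction of inputs. -/
theorem ltf_of_relu_andreev_lower_bound (δ : ℝ) (hδ0 : 0 < δ) (hδ1 : δ < 1 / 2) :
    ∃ (N : ℕ) (c : ℝ), 0 < c ∧
      ∀ n : ℕ, N ≤ n →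
      ∀ ε : ℝ,
        Real.sqrt (2 * Real.logb 2 n ^ ((2 : ℝ) / (2 - δ)) / n) < ε → ε ≤ 1 / 2 →
      ∀ (w : ℕ) (wx : Fin w → Fin (andreevM n) → ℝ)
        (wa : Fin w → Fin (andreevK n) → Fin (andreevR n) → ℝ)
        (bias : Fin w → ℝ) (c₀ : ℝ) (cw : Fin w → ℝ),
        ((1 / 2 + ε) * 2 ^ (andreevM n + andreevK n * andreevR n) : ℝ) ≤
          (Finset.univ.filter
            (fun p : (Fin (andreevM n) → Bool) ×
                     (Fin (andreevK n) → Fin (andreevR n) → Bool) =>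
              ((0 ≤ c₀ + ∑ i, cw i * max 0
                  ((∑ j, wx i j * zo (p.1 j)) +
                   (∑ q, ∑ s, wa i q s * zo (p.2 q s)) + bias i)) ↔
               andreev n p.1 p.2))).card →
        c * ε ^ (2 * (1 - δ)) * (n : ℝ) ^ ((1 : ℝ) - δ) ≤ w := by
  obtain ⟨K₀, hK₀⟩ : ∃ K₀ : ℕ, ∀ k : ℕ, K₀ ≤ k → k ^ 6 ≤ 2 ^ k := by
    have h := tendsto_pow_const_div_const_pow_of_one_lt 6 (show (1 : ℝ) < 2 by norm_num)
    obtain ⟨K₀, h⟩ := Filter.eventually_atTop.1 (h.eventually_lt_const zero_lt_one)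
    refine ⟨K₀, fun k hk => ?_⟩
    have := h k hk
    rw [div_lt_one (by positivity)] at this
    exact_mod_cast this.le
  set η : ℝ := δ / (2 - δ) with hη
  have hηpos : 0 < η := div_pos hδ0 (by linarith)
  -- `k ≥ K` ensures both `k ^ 5 ≤ r` and `(logb 2 n) ^ η ≥ 8`.
  set K := max (max K₀ ⌈(8 : ℝ) ^ (1 / η)⌉₊) 1 with hK
  refine ⟨2 * 2 ^ K, 1 / 104, by norm_num, ?_⟩
  intro n hn ε hε1 hε2 w wx wa bias c₀ cw hcard
  have hnM : 2 ^ K ≤ n / 2 := by omega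
  have hM0 : n / 2 ≠ 0 := by
    have : 0 < 2 ^ K := by positivity
    omega
  have hkK : K ≤ andreevK n := Nat.le_log_of_pow_le (by norm_num) hnM
  have hk1 : 1 ≤ andreevK n := (le_max_right _ _).trans hkK
  have hkpow : 2 ^ andreevK n ≤ n / 2 := Nat.pow_log_le_self 2 hM0
  have hklt : n / 2 < 2 ^ (andreevK n + 1) := Nat.lt_pow_succ_log_self (by norm_num) _
  have hr : andreevK n ^ 5 ≤ andreevR n := by
    have h6 := hK₀ (andreevK n) (((le_max_left _ _).trans (le_max_left _ _)).trans hkK)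
    refine (Nat.le_div_iff_mul_le (by omega)).2 ?_
    calc andreevK n ^ 5 * (2 * andreevK n) = 2 * andreevK n ^ 6 := by ring
      _ ≤ n := by omega
  have hε0 : 0 ≤ ε := (Real.sqrt_nonneg _).trans hε1.le
  simp only [andreev_iff n hM0] at hcard
  have hmain := advantage_bound hk1 hr (fun a => ⟨binOf n a, binOf_lt n hM0 a⟩)
    (fun j a y y' hyy => binOf_colUpd_injective n a j (congrArg Fin.val hyy))
    ε hε0 w wx wa bias c₀ cw hcard
  set k := andreevK n with hk
  set L := Real.logb 2 n with hL
  have hn0 : 0 < n := by omega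
  have hnR : (0 : ℝ) < n := by exact_mod_cast hn0
  have hkL : (k : ℝ) ≤ L := by
    rw [hL, Real.le_logb_iff_rpow_le (by norm_num) hnR, Real.rpow_natCast]
    have : 2 ^ k ≤ n := by omega
    exact_mod_cast this
  have hL8 : (8 : ℝ) ^ (1 / η) ≤ L := by
    refine (Nat.le_ceil _).trans (le_trans ?_ hkL)
    exact_mod_cast ((le_max_right _ _).trans (le_max_left _ _)).trans hkK
  have hL1 : (1 : ℝ) ≤ L := le_trans (by exact_mod_cast hk1) hkL
  have hLη : 8 ≤ L ^ η := by
    calc (8 : ℝ) = ((8 : ℝ) ^ (1 / η)) ^ η := by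
          rw [← Real.rpow_mul (by norm_num), one_div_mul_cancel hηpos.ne', Real.rpow_one]
      _ ≤ L ^ η := Real.rpow_le_rpow (by positivity) hL8 hηpos.le
  have hLpow : 8 * L ≤ L ^ ((2 : ℝ) / (2 - δ)) := by
    have : (2 : ℝ) / (2 - δ) = η + 1 := by
      have : 2 - δ ≠ 0 := by linarith
      rw [hη]; field_simp; ring
    rw [this, Real.rpow_add (by linarith), Real.rpow_one]
    exact mul_le_mul_of_nonneg_right hLη (by linarith)
  set T := ε ^ 2 * n with hT
  have hTL : 16 * L ≤ T := by
    have h1 := Real.lt_sq_of_sqrt_lt hε1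
    rw [div_lt_iff₀ hnR] at h1
    linarith
  have hN : (n : ℝ) ≤ 4 * 2 ^ k := by
    have : n ≤ 4 * 2 ^ k := by
      rw [pow_succ] at hklt
      omega
    exact_mod_cast this
  have hTw : T ≤ 104 * w := by
    have : T ≤ ε ^ 2 * (4 * 2 ^ k) := mul_le_mul_of_nonneg_left hN (by positivity)
    linarith
  have hpow : ε ^ (2 * (1 - δ)) * (n : ℝ) ^ ((1 : ℝ) - δ) = T ^ (1 - δ) := by
    rw [hT, Real.mul_rpow (by positivity) hnR.le, Real.rpow_mul hε0]
    norm_num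
  have hT1 : T ^ (1 - δ) ≤ T := by
    calc T ^ (1 - δ) ≤ T ^ (1 : ℝ) := Real.rpow_le_rpow_of_exponent_le (by linarith) (by linarith)
      _ = T := Real.rpow_one T
  rw [mul_assoc, hpow]
  linarith
end

section
/- Let m, W ≥ 1 and let a¹, a² ∈ ℤ^m and b ∈ ℤ have all entries of absolute value at most W. Define the 2^m × 2^m real matrix G indexed by (x, y) ∈ {-1,1}^m × {-1,1}^m via G(x,y) = max(0, ⟨a¹, x⟩ + ⟨a², y⟩ + b). Then the map x ↦ ⟨a¹, x⟩ takes at most 2mW + 1 distinct values on {-1,1}^m, likewise for y ↦ ⟨a², y⟩, G(x,y) depends only on the pair (⟨a¹, x⟩, ⟨a², y⟩), and consequently the rank of G is at most 2mW + 1. -/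
/-- The integer-weighted sum at a sign vector is an integer of absolute value at most `m * W`, and
`[-mW, mW]` contains `2mW + 1` integers. -/
lemma card_image_weighted_sum_le (m W : ℕ) (a : Fin m → ℤ) (ha : ∀ i, |a i| ≤ (W : ℤ)) :
    (Finset.univ.image
        (fun x : Fin m → Bool => ∑ i, (a i : ℝ) * pmEnc x i)).card ≤ 2 * m * W + 1 := by
  have hsub : Finset.univ.image (fun x : Fin m → Bool => ∑ i, (a i : ℝ) * pmEnc x i) ⊆
      (Finset.Icc (-((m : ℤ) * W)) ((m : ℤ) * W)).image (fun k : ℤ => (k : ℝ)) := by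
    intro r hr
    obtain ⟨x, -, rfl⟩ := Finset.mem_image.1 hr
    refine Finset.mem_image.2 ⟨∑ i, a i * (if x i then 1 else -1), ?_, ?_⟩
    · rw [Finset.mem_Icc, ← abs_le]
      calc |∑ i, a i * (if x i then 1 else -1)|
          ≤ ∑ i, |a i * (if x i then 1 else -1)| := Finset.abs_sum_le_sum_abs _ _
        _ ≤ ∑ _i : Fin m, (W : ℤ) := by
            refine Finset.sum_le_sum fun i _ => ?_
            have := ha i
            split_ifs <;> simpa using this
        _ = (m : ℤ) * W := by simp
    · push_cast
      simp [pmEnc]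
  refine (Finset.card_le_card hsub).trans (Finset.card_image_le.trans ?_)
  rw [Int.card_Icc, mul_assoc]
  have : ((m : ℤ) * W) = ((m * W : ℕ) : ℤ) := by push_cast; rfl
  omega

/-- A matrix whose row at `x` depends only on `f x` has at most as many distinct rows as `f` has
values, which bounds the dimension of its row space. -/
lemma rank_le_card_image {α β : Type*} [Fintype α] [Fintype β] (f : α → ℝ) (g : ℝ → β → ℝ) :
    (Matrix.of fun x y => g (f x) y).rank ≤ (Finset.univ.image f).card := by
  classical
  have hrow : Set.range (Matrix.of fun x y => g (f x) y).row
      = (((Finset.univ.image f).image g : Finset (β → ℝ)) : Set (β → ℝ)) := by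
    rw [Finset.coe_image, Finset.coe_image, Finset.coe_univ, Set.image_univ, ← Set.range_comp]
    rfl
  rw [Matrix.rank_eq_finrank_span_row, hrow]
  exact (finrank_span_finset_le_card _).trans Finset.card_image_le

/-- base case of the block-structure lemma, for a single ReLU gate with
integer weights bounded by `W`. -/
theorem single_relu_matrix_rank (m W : ℕ) (hm : 1 ≤ m) (hW : 1 ≤ W)
    (a₁ a₂ : Fin m → ℤ) (b : ℤ)
    (ha₁ : ∀ i, |a₁ i| ≤ (W : ℤ)) (ha₂ : ∀ i, |a₂ i| ≤ (W : ℤ)) (hb : |b| ≤ (W : ℤ)) :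
    (Finset.univ.image
        (fun x : Fin m → Bool => ∑ i, (a₁ i : ℝ) * pmEnc x i)).card ≤ 2 * m * W + 1 ∧
    (Finset.univ.image
        (fun y : Fin m → Bool => ∑ i, (a₂ i : ℝ) * pmEnc y i)).card ≤ 2 * m * W + 1 ∧
    (∀ x x' y y' : Fin m → Bool,
      (∑ i, (a₁ i : ℝ) * pmEnc x i) = (∑ i, (a₁ i : ℝ) * pmEnc x' i) →
      (∑ i, (a₂ i : ℝ) * pmEnc y i) = (∑ i, (a₂ i : ℝ) * pmEnc y' i) →
      max 0 ((∑ i, (a₁ i : ℝ) * pmEnc x i) + (∑ i, (a₂ i : ℝ) * pmEnc y i) + (b : ℝ)) =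
        max 0 ((∑ i, (a₁ i : ℝ) * pmEnc x' i) + (∑ i, (a₂ i : ℝ) * pmEnc y' i) + (b : ℝ))) ∧
    Matrix.rank (Matrix.of fun x y : Fin m → Bool =>
        max 0 ((∑ i, (a₁ i : ℝ) * pmEnc x i) + (∑ i, (a₂ i : ℝ) * pmEnc y i) + (b : ℝ)))
      ≤ 2 * m * W + 1 := by
  have h₁ := card_image_weighted_sum_le m W a₁ ha₁
  refine ⟨h₁, card_image_weighted_sum_le m W a₂ ha₂, ?_, ?_⟩
  · intro x x' y y' hx hy
    rw [hx, hy]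
  · exact (rank_le_card_image (fun x : Fin m → Bool => ∑ i, (a₁ i : ℝ) * pmEnc x i)
      (fun s y => max 0 (s + (∑ i, (a₂ i : ℝ) * pmEnc y i) + (b : ℝ)))).trans h₁
end

section
/- Let m, W, k ≥ 1 (or k = 0) and widths w_1, ..., w_k ≥ 1. Consider a circuit of ReLU gates of depth k+1 on inputs (x, y) ∈ {-1,1}^m × {-1,1}^m: the first layer computes h^{(1)}_j(x,y) = max(0, ⟨a¹_j, x⟩ + ⟨a²_j, y⟩ + b_j) for j = 1,...,w_1; for 2 ≤ i ≤ k the i-th layer computes h^{(i)}_j = max(0, b^{(i)}_j + Σ_{l=1}^{w_{i-1}} A^{(i)}_{jl} h^{(i-1)}_l); and the single output gate computes g(x,y) = max(0, β + Σ_{l=1}^{w_k} α_l h^{(k)}_l(x,y)). Assume the bottom-layer weights are restricted: all entries of a¹_j, a²_j and b_j are integers of absolute value at most W, and there is a linear order on {-1,1}^m such that for every j both x ↦ ⟨a¹_j, x⟩ and y ↦ ⟨a²_j, y⟩ are nondecreasing with respect to that order. Then, setting D = (Π_{i=1}^k w_i)·(2mW + 1), there exist enumerations ρ, ρ' of {-1,1}^m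 by {1,...,2^m}, nondecreasing maps r, c : {1,...,2^m} → {1,...,D}, and H : {1,...,D} × {1,...,D} → ℝ such that g(ρ(s), ρ'(t)) = H(r(s), c(t)) for all s, t. In particular the 2^m × 2^m matrix [g(x,y)] has rank at most D. -/
/-- The linear form `⟨a, x⟩` on the ±1 encoding, with values in `ℤ`. -/
def intForm {m : ℕ} (a : Fin m → ℤ) (x : Fin m → Bool) : ℤ :=
  ∑ i, a i * (if x i then 1 else -1)

lemma intForm_cast {m : ℕ} (a : Fin m → ℤ) (x : Fin m → Bool) :
    (intForm a x : ℝ) = ∑ i, (a i : ℝ) * pmEnc x i := by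
  simp [intForm, pmEnc]

lemma abs_intForm_le {m W : ℕ} (a : Fin m → ℤ) (ha : ∀ i, |a i| ≤ (W : ℤ))
    (x : Fin m → Bool) : |intForm a x| ≤ (m * W : ℤ) := by
  unfold intForm
  calc |∑ i, a i * (if x i then 1 else -1)|
      ≤ ∑ i, |a i * (if x i then 1 else -1)| := Finset.abs_sum_le_sum_abs _ _
    _ ≤ ∑ _i : Fin m, (W : ℤ) := by
        refine Finset.sum_le_sum fun i _ => ?_
        split_ifs <;> simpa using ha i
    _ = m * W := by simp

/-- Finitely many bounded integer forms that are nondecreasing along a common order are all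
determined by one nondecreasing index, namely their shifted sum. -/
lemma exists_block_index {m W w D N : ℕ} (a : Fin w → Fin m → ℤ)
    (ha : ∀ j i, |a j i| ≤ (W : ℤ)) (ρ : Fin N → Fin m → Bool)
    (hmono : ∀ j, Monotone (fun s => ∑ i, (a j i : ℝ) * pmEnc (ρ s) i))
    (hD : w * (2 * m * W) < D) :
    ∃ r : Fin N → Fin D, Monotone r ∧ ∀ s t, r s = r t → ∀ j,
      ∑ i, (a j i : ℝ) * pmEnc (ρ s) i = ∑ i, (a j i : ℝ) * pmEnc (ρ t) i := by
  have hF : ∀ j, Monotone (fun s => intForm (a j) (ρ s)) := fun j s t hst => by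
    have := hmono j hst
    simp only [← intForm_cast] at this
    exact_mod_cast this
  have hbd : ∀ j s, |intForm (a j) (ρ s)| ≤ (m * W : ℤ) := fun j s =>
    abs_intForm_le _ (ha j) _
  let S : Fin N → ℤ := fun s => ∑ j, (intForm (a j) (ρ s) + m * W)
  have hS0 : ∀ s, 0 ≤ S s := fun s => Finset.sum_nonneg fun j _ => by
    linarith [(abs_le.mp (hbd j s)).1]
  have hS1 : ∀ s, S s ≤ w * (2 * m * W) := fun s => by
    calc S s ≤ ∑ _j : Fin w, (2 * m * W : ℤ) := Finset.sum_le_sum fun j _ => by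
          linarith [(abs_le.mp (hbd j s)).2]
      _ = w * (2 * m * W) := by simp
  have hSm : Monotone S := fun s t hst => Finset.sum_le_sum fun j _ => by
    linarith [hF j hst]
  have hlt : ∀ s, (S s).toNat < D := fun s => by
    have h1 := hS1 s
    zify at hD
    rw [Int.toNat_lt (hS0 s)]
    linarith
  refine ⟨fun s => ⟨(S s).toNat, hlt s⟩, fun s t hst => ?_, ?_⟩
  · exact Fin.mk_le_mk.mpr (Int.toNat_le_toNat (hSm hst))
  have key : ∀ s t, s ≤ t → S s = S t → ∀ j, intForm (a j) (ρ s) = intForm (a j) (ρ t) := by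
    intro s t hst heq j
    have := (Finset.sum_eq_sum_iff_of_le (s := Finset.univ)
      (f := fun j => intForm (a j) (ρ s) + (m * W : ℤ))
      (g := fun j => intForm (a j) (ρ t) + (m * W : ℤ))
      (fun j _ => by linarith [hF j hst])).mp heq j (Finset.mem_univ j)
    exact add_right_cancel this
  intro s t hst j
  have heq : S s = S t := by
    have h1 : (S s).toNat = (S t).toNat := congrArg Fin.val hst
    have := hS0 s
    have := hS0 t
    omega
  rw [← intForm_cast, ← intForm_cast]
  rcases le_total s t with h | h
  · rw [key s t h heq j]
  · rw [key t s h heq.symm j]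

/-- If the bottom layer does not distinguish two inputs, no later layer does. -/
lemma layer_congr {X : Type*} {k : ℕ} {v : ℕ → ℕ}
    (A : (i : ℕ) → Fin (v (i + 1)) → Fin (v i) → ℝ) (bw : (i : ℕ) → Fin (v (i + 1)) → ℝ)
    (h : (i : ℕ) → Fin (v i) → X → X → ℝ)
    (hstep : ∀ i < k, ∀ (j : Fin (v (i + 1))) x y,
      h (i + 1) j x y = max 0 (bw i j + ∑ l, A i j l * h i l x y))
    {x x' y y' : X} (h0 : ∀ j, h 0 j x y = h 0 j x' y') :
    ∀ i ≤ k, ∀ j, h i j x y = h i j x' y' := by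
  intro i
  induction i with
  | zero => exact fun _ => h0
  | succ i ih =>
    intro hi j
    rw [hstep i hi, hstep i hi]
    simp only [ih (Nat.le_of_succ_le hi)]

lemma rank_le_of_row_factor {X Y : Type*} [Fintype X] [Fintype Y] {D : ℕ}
    (f : X → Fin D) (B : Fin D → Y → ℝ) :
    Matrix.rank (Matrix.of fun x y => B (f x) y) ≤ D := by
  have : (Matrix.of fun x y => B (f x) y) =
      (Matrix.of fun x d => if f x = d then (1 : ℝ) else 0) * Matrix.of B := by
    ext x y
    simp [Matrix.mul_apply]
  rw [this]
  exact (Matrix.rank_mul_le_left _ _).trans ((Matrix.rank_le_card_width _).trans_eq (Fintype.card_fin D))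

/-- block structure and rank bound for a depth-`(k+1)` circuit of ReLU
gates (hidden widths `v 0, …, v (k-1)`, a single output ReLU gate at layer `k`) whose
bottom-layer weights are integers of magnitude at most `W` ordering the hypercube
monotonically along a common linear order. -/
theorem deep_relu_block_structure (m W k : ℕ) (hm : 1 ≤ m) (hW : 1 ≤ W)
    (v : ℕ → ℕ) (hv : ∀ i < k, 1 ≤ v i) (hvk : v k = 1)
    (a₁ a₂ : Fin (v 0) → Fin m → ℤ) (b : Fin (v 0) → ℤ)
    (ha₁ : ∀ j i, |a₁ j i| ≤ (W : ℤ)) (ha₂ : ∀ j i, |a₂ j i| ≤ (W : ℤ))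
    (hb : ∀ j, |b j| ≤ (W : ℤ))
    (horder : ∃ ρ : Fin (2 ^ m) ≃ (Fin m → Bool), ∀ j : Fin (v 0),
      Monotone (fun s => ∑ i, (a₁ j i : ℝ) * pmEnc (ρ s) i) ∧
      Monotone (fun s => ∑ i, (a₂ j i : ℝ) * pmEnc (ρ s) i))
    (A : (i : ℕ) → Fin (v (i + 1)) → Fin (v i) → ℝ)
    (bw : (i : ℕ) → Fin (v (i + 1)) → ℝ)
    (h : (i : ℕ) → Fin (v i) → (Fin m → Bool) → (Fin m → Bool) → ℝ)
    (hbase : ∀ j x y, h 0 j x y =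
      max 0 ((∑ i, (a₁ j i : ℝ) * pmEnc x i) + (∑ i, (a₂ j i : ℝ) * pmEnc y i) + (b j : ℝ)))
    (hstep : ∀ i < k, ∀ (j : Fin (v (i + 1))) x y,
      h (i + 1) j x y = max 0 (bw i j + ∑ l, A i j l * h i l x y))
    (j₀ : Fin (v k)) :
    ∃ (ρ ρ' : Fin (2 ^ m) ≃ (Fin m → Bool))
      (r c : Fin (2 ^ m) → Fin ((∏ i ∈ Finset.range k, v i) * (2 * m * W + 1)))
      (H : Fin ((∏ i ∈ Finset.range k, v i) * (2 * m * W + 1)) →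
           Fin ((∏ i ∈ Finset.range k, v i) * (2 * m * W + 1)) → ℝ),
      Monotone r ∧ Monotone c ∧
      (∀ s t, h k j₀ (ρ s) (ρ' t) = H (r s) (c t)) ∧
      Matrix.rank (Matrix.of fun x y : Fin m → Bool => h k j₀ x y) ≤
        (∏ i ∈ Finset.range k, v i) * (2 * m * W + 1) := by
  obtain ⟨ρ, hρ⟩ := horder
  -- For `k = 0` the bottom layer is the output gate, so `v 0 = 1` equals the empty product.
  have hv0 : 1 ≤ v 0 ∧ v 0 ≤ ∏ i ∈ Finset.range k, v i := by
    rcases k with _ | k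
    · simp [hvk]
    · refine ⟨hv 0 k.succ_pos, ?_⟩
      rw [Finset.prod_range_succ']
      exact Nat.le_mul_of_pos_left _ (Finset.prod_pos fun i hi =>
        hv (i + 1) (Nat.succ_lt_succ (Finset.mem_range.mp hi)))
  have hD : v 0 * (2 * m * W) < (∏ i ∈ Finset.range k, v i) * (2 * m * W + 1) := by
    calc v 0 * (2 * m * W) < v 0 * (2 * m * W + 1) :=
          Nat.mul_lt_mul_of_pos_left (Nat.lt_succ_self _) hv0.1
      _ ≤ _ := Nat.mul_le_mul_right _ hv0.2
  generalize (∏ i ∈ Finset.range k, v i) * (2 * m * W + 1) = D at hD ⊢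
  obtain ⟨r, hr, hr'⟩ := exists_block_index a₁ ha₁ ρ (fun j => (hρ j).1) hD
  obtain ⟨c, hc, hc'⟩ := exists_block_index a₂ ha₂ ρ (fun j => (hρ j).2) hD
  have : Nonempty (Fin (2 ^ m)) := ⟨ρ.symm fun _ => true⟩
  have hH : ∀ s t, h k j₀ (ρ s) (ρ t) =
      h k j₀ (ρ (Function.invFun r (r s))) (ρ (Function.invFun c (c t))) := by
    intro s t
    have e1 := hr' _ _ (Function.invFun_eq (f := r) ⟨s, rfl⟩)
    have e2 := hc' _ _ (Function.invFun_eq (f := c) ⟨t, rfl⟩)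
    refine layer_congr A bw h hstep (fun j => ?_) k le_rfl j₀
    rw [hbase, hbase, e1 j, e2 j]
  refine ⟨ρ, ρ, r, c,
    fun p q => h k j₀ (ρ (Function.invFun r p)) (ρ (Function.invFun c q)), hr, hc, hH, ?_⟩
  let B : Fin D → (Fin m → Bool) → ℝ := fun p y =>
    h k j₀ (ρ (Function.invFun r p)) (ρ (Function.invFun c (c (ρ.symm y))))
  have hM : (Matrix.of fun x y : Fin m → Bool => h k j₀ x y) =
      Matrix.of fun x y => B (r (ρ.symm x)) y := by
    ext x y
    simpa [B] using hH (ρ.symm x) (ρ.symm y)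
  have hB := rank_le_of_row_factor (fun x => r (ρ.symm x)) B
  rw [← hM] at hB
  exact hB
end

section
/- Let m, W ≥ 1, d ≥ 2 and widths w_1, ..., w_{d-1} ≥ 1. Consider an LTF-of-(ReLU)^{d-1} circuit on inputs (x, y) ∈ {-1,1}^m × {-1,1}^m: layers 1 through d-1 are ReLU layers as follows — h^{(1)}_j(x,y) = max(0, ⟨a¹_j, x⟩ + ⟨a²_j, y⟩ + b_j) for j = 1,...,w_1, and h^{(i)}_j = max(0, b^{(i)}_j + Σ_{l=1}^{w_{i-1}} A^{(i)}_{jl} h^{(i-1)}_l) for 2 ≤ i ≤ d-1 — and the output is f(x,y) = 1 if β + Σ_{j=1}^{w_{d-1}} α_j h^{(d-1)}_j(x,y) ≥ 0 and f(x,y) = -1 otherwise. Assume the bottom-layer weights are restricted: all entries of a¹_j, a²_j and b_j are integers of absolute value at most W, and there is a linear order on {-1,1}^m such that for every j both x ↦ ⟨a¹_j, x⟩ and y ↦ ⟨a²_j, y⟩ are nondecreasing with respect to that order. Then the sign-rank of the 2^m × 2^m matrix [f(x,y)] is at most 1 + (Π_{k=1}^{d-1} w_k)² · (2mW + 1)².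 -/
/-- The sign-rank of a `±1` matrix `A`: the least rank of a real matrix whose entries all
have the same strict sign as the corresponding entries of `A`. -/
noncomputable def signRank {ι κ : Type*} [Fintype ι] [Fintype κ]
    (A : Matrix ι κ ℝ) : ℕ :=
  sInf {r : ℕ | ∃ B : Matrix ι κ ℝ, (∀ s t, 0 < A s t * B s t) ∧ B.rank = r}

/-- A matrix whose rows depend only on the label `T x`, with labels in `S`, has rank at most
`#S`. -/
theorem rank_le_card_of_rows_factor {ι κ : Type*} [Fintype ι] [Fintype κ] (M : Matrix ι κ ℝ)
    (T : ι → ℤ) (S : Finset ℤ) (hS : ∀ x, T x ∈ S) (hT : ∀ x x', T x = T x' → M x = M x') :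
    M.rank ≤ S.card := by
  classical
  rcases isEmpty_or_nonempty ι with hι | hι
  · exact (M.rank_le_card_height).trans (by simp)
  have hsub : Set.range M.row ⊆ ((S.image fun t => M (Function.invFun T t)) : Set (κ → ℝ)) := by
    rintro _ ⟨x, rfl⟩
    rw [Finset.mem_coe, Finset.mem_image]
    exact ⟨T x, hS x, hT _ _ (Function.invFun_eq ⟨x, rfl⟩)⟩
  rw [Matrix.rank_eq_finrank_span_row]
  calc _ ≤ _ := Submodule.finrank_mono (Submodule.span_mono hsub)
    _ ≤ _ := finrank_span_finset_le_card _
    _ ≤ _ := Finset.card_image_le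

/-- The integer value `⟨a, x⟩` of a linear form at the `±1` encoding of `x`. -/
def bottomForm {m : ℕ} (a : Fin m → ℤ) (x : Fin m → Bool) : ℤ :=
  ∑ i, a i * (if x i then 1 else -1)

theorem bottomForm_cast {m : ℕ} (a : Fin m → ℤ) (x : Fin m → Bool) :
    (bottomForm a x : ℝ) = ∑ i, (a i : ℝ) * pmEnc x i := by
  simp [bottomForm, pmEnc]

theorem abs_bottomForm_le {m : ℕ} (W : ℕ) (a : Fin m → ℤ) (ha : ∀ i, |a i| ≤ (W : ℤ))
    (x : Fin m → Bool) : |bottomForm a x| ≤ (m * W : ℤ) := by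
  calc |bottomForm a x| ≤ ∑ i, |a i * (if x i then 1 else -1)| := Finset.abs_sum_le_sum_abs _ _
    _ ≤ ∑ _i : Fin m, (W : ℤ) := by
        refine Finset.sum_le_sum fun i _ => ?_
        rw [abs_mul]
        split_ifs <;> simpa using ha i
    _ = m * W := by simp

/-- Under monotonicity along a common order, the sum of the forms determines each of them. -/
theorem bottomForm_eq_of_sum_eq {m n : ℕ} (a : Fin n → Fin m → ℤ)
    (ρ : Fin (2 ^ m) ≃ (Fin m → Bool)) (hρ : ∀ j, Monotone fun s => bottomForm (a j) (ρ s))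
    (x x' : Fin m → Bool) (hT : ∑ j, bottomForm (a j) x = ∑ j, bottomForm (a j) x') (j : Fin n) :
    bottomForm (a j) x = bottomForm (a j) x' := by
  obtain ⟨s, rfl⟩ := ρ.surjective x
  obtain ⟨t, rfl⟩ := ρ.surjective x'
  rcases le_total s t with hst | hst
  · exact (Finset.sum_eq_sum_iff_of_le fun j _ => hρ j hst).1 hT j (Finset.mem_univ j)
  · exact ((Finset.sum_eq_sum_iff_of_le fun j _ => hρ j hst).1 hT.symm j (Finset.mem_univ j)).symm

/-- the sign-rank of an LTF-of-(ReLU)^{d-1} circuit (hidden ReLU layers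
`0, …, d-2` of widths `v 0, …, v (d-2)`, output LTF gate) whose bottom-layer weights are
integers of magnitude at most `W` ordering the hypercube monotonically along a common
linear order is at most `1 + (Π_k v k)² (2mW+1)²`. -/
theorem ltf_of_relu_signRank_upper_bound (m W d : ℕ) (hm : 1 ≤ m) (hW : 1 ≤ W)
    (hd : 2 ≤ d)
    (v : ℕ → ℕ) (hv : ∀ i < d - 1, 1 ≤ v i)
    (a₁ a₂ : Fin (v 0) → Fin m → ℤ) (b : Fin (v 0) → ℤ)
    (ha₁ : ∀ j i, |a₁ j i| ≤ (W : ℤ)) (ha₂ : ∀ j i, |a₂ j i| ≤ (W : ℤ))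
    (hb : ∀ j, |b j| ≤ (W : ℤ))
    (horder : ∃ ρ : Fin (2 ^ m) ≃ (Fin m → Bool), ∀ j : Fin (v 0),
      Monotone (fun s => ∑ i, (a₁ j i : ℝ) * pmEnc (ρ s) i) ∧
      Monotone (fun s => ∑ i, (a₂ j i : ℝ) * pmEnc (ρ s) i))
    (A : (i : ℕ) → Fin (v (i + 1)) → Fin (v i) → ℝ)
    (bw : (i : ℕ) → Fin (v (i + 1)) → ℝ)
    (α : Fin (v (d - 2)) → ℝ) (β : ℝ)
    (h : (i : ℕ) → Fin (v i) → (Fin m → Bool) → (Fin m → Bool) → ℝ)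
    (hbase : ∀ j x y, h 0 j x y =
      max 0 ((∑ i, (a₁ j i : ℝ) * pmEnc x i) + (∑ i, (a₂ j i : ℝ) * pmEnc y i) + (b j : ℝ)))
    (hstep : ∀ i, i + 1 < d - 1 → ∀ (j : Fin (v (i + 1))) x y,
      h (i + 1) j x y = max 0 (bw i j + ∑ l, A i j l * h i l x y)) :
    signRank (Matrix.of fun x y : Fin m → Bool =>
        if 0 ≤ β + ∑ j, α j * h (d - 2) j x y then (1 : ℝ) else -1) ≤
      1 + (∏ i ∈ Finset.range (d - 1), v i) ^ 2 * (2 * m * W + 1) ^ 2 := by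
  obtain ⟨ρ, hρ⟩ := horder
  set M : Matrix (Fin m → Bool) (Fin m → Bool) ℝ := Matrix.of fun x y : Fin m → Bool =>
    if 0 ≤ β + ∑ j, α j * h (d - 2) j x y then (1 : ℝ) else -1 with hM
  have hsr : signRank M ≤ M.rank := by
    refine Nat.sInf_le ⟨M, fun s t => ?_, rfl⟩
    simp only [hM, Matrix.of_apply]
    split_ifs <;> norm_num
  have hmono : ∀ j, Monotone fun s => bottomForm (a₁ j) (ρ s) := by
    intro j s t hst
    have := (hρ j).1 hst
    simp only [← bottomForm_cast] at this
    exact_mod_cast this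
  have hrows : ∀ x x', ∑ j, bottomForm (a₁ j) x = ∑ j, bottomForm (a₁ j) x' → M x = M x' := by
    intro x x' hT
    have hu := bottomForm_eq_of_sum_eq a₁ ρ hmono x x' hT
    have hlayer : ∀ i, i < d - 1 → ∀ j y, h i j x y = h i j x' y := by
      intro i
      induction i with
      | zero =>
        intro _ j y
        rw [hbase, hbase, ← bottomForm_cast, ← bottomForm_cast (a₁ j) x', hu j]
      | succ i ih =>
        intro hi j y
        rw [hstep i hi, hstep i hi]
        simp only [ih (by omega)]
    funext y
    simp only [hM, Matrix.of_apply, hlayer (d - 2) (by omega)]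
  have hmem : ∀ x, ∑ j, bottomForm (a₁ j) x ∈
      Finset.Icc (-((v 0 * (m * W) : ℕ) : ℤ)) ((v 0 * (m * W) : ℕ) : ℤ) := by
    intro x
    rw [Finset.mem_Icc, ← abs_le]
    calc _ ≤ ∑ j, |bottomForm (a₁ j) x| := Finset.abs_sum_le_sum_abs _ _
      _ ≤ ∑ _j : Fin (v 0), (m * W : ℤ) :=
          Finset.sum_le_sum fun j _ => abs_bottomForm_le W (a₁ j) (ha₁ j) x
      _ = _ := by simp
  have hrank := rank_le_card_of_rows_factor M _ _ hmem hrows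
  rw [Int.card_Icc] at hrank
  have hP : v 0 ≤ ∏ i ∈ Finset.range (d - 1), v i :=
    Finset.single_le_prod' (f := v) (fun i hi => hv i (Finset.mem_range.1 hi))
      (Finset.mem_range.2 (by omega))
  calc signRank M ≤ 1 + v 0 * (2 * m * W) := by
        refine hsr.trans (hrank.trans (le_of_eq ?_))
        have : v 0 * (2 * m * W) = 2 * (v 0 * (m * W)) := by ring
        omega
    _ ≤ 1 + (∏ i ∈ Finset.range (d - 1), v i) ^ 2 * (2 * m * W + 1) ^ 2 := by
        gcongr
        · exact hP.trans (Nat.le_self_pow two_ne_zero _)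
        · exact (Nat.le_succ _).trans (Nat.le_self_pow two_ne_zero _)
end

section
/- There exists a universal constant c > 0 such that the following holds for all m, W ≥ 1 and d ≥ 2. Let f : {-1,1}^m × {-1,1}^m → {-1,1} be a Boolean function whose associated 2^m × 2^m matrix has sign-rank at least 2^{m^{1/4}}. Then any LTF-of-(ReLU)^{d-1} circuit with layer widths w_1, ..., w_{d-1} whose bottom-layer weights are restricted (all entries of the bottom-layer weight vectors a¹_j, a²_j and biases b_j are integers of absolute value at most W, and there is a linear order on {-1,1}^m such that for every j both x ↦ ⟨a¹_j, x⟩ and y ↦ ⟨a²_j, y⟩ are nondecreasing with respect to that order) that computes f on all of {-1,1}^m × {-1,1}^m must have size 1 + Σ_{k=1}^{d-1} w_k ≥ c · (d-1) · 2^{m^{1/8}/(d-1)} / (mW)^{1/(d-1)}. -/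
/-- If the rows of a `±1` matrix are determined by an integer label of absolute value at most `N`,
then there are at most `2 N + 1` distinct rows, so the sign-rank is at most `2 N + 1`. -/
lemma signRank_le_of_factor {ι κ : Type*} [Fintype ι] [Fintype κ]
    (f : ι → κ → ℝ) (hf : ∀ x y, f x y = 1 ∨ f x y = -1)
    (g : ι → ℤ) (N : ℕ) (hg : ∀ x, |g x| ≤ N) (hfac : ∀ x x', g x = g x' → f x = f x') :
    signRank (Matrix.of f) ≤ 2 * N + 1 := by
  classical
  have h1 : signRank (Matrix.of f) ≤ (Matrix.of f).rank := by
    apply Nat.sInf_le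
    refine ⟨Matrix.of f, fun s t => ?_, rfl⟩
    rcases hf s t with h | h <;> simp [h]
  refine h1.trans ?_
  have hfin : (Finset.univ.image f).card ≤ 2 * N + 1 := by
    have hsub : Finset.univ.image f ⊆
        (Finset.Icc (-(N : ℤ)) N).image (Function.extend g f 0) := by
      intro r hr
      obtain ⟨x, -, rfl⟩ := Finset.mem_image.1 hr
      refine Finset.mem_image.2 ⟨g x, Finset.mem_Icc.2 (abs_le.1 (hg x)), ?_⟩
      exact Function.FactorsThrough.extend_apply (fun a b hab => hfac a b hab) 0 x
    calc (Finset.univ.image f).card ≤ _ := Finset.card_le_card hsub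
      _ ≤ (Finset.Icc (-(N : ℤ)) N).card := Finset.card_image_le
      _ = 2 * N + 1 := by rw [Int.card_Icc]; omega
  rw [Matrix.rank_eq_finrank_span_row]
  have hr : Set.range (Matrix.of f).row =
      ((Finset.univ.image f : Finset (κ → ℝ)) : Set (κ → ℝ)) := by
    rw [Finset.coe_image, Finset.coe_univ, Set.image_univ]
    rfl
  rw [hr]
  exact (finrank_span_finset_le_card _).trans hfin

/-- For maps monotone along a common enumeration `ρ` of the domain, equality of the sums of their
values at two points forces equality of all the values. -/
lemma rows_eq_of_sum_eq {X : Type*} {n w : ℕ} (ρ : Fin n ≃ X) (p : Fin w → X → ℝ)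
    (hp : ∀ j, Monotone (fun s => p j (ρ s))) (x x' : X)
    (hs : ∑ j, p j x = ∑ j, p j x') (j : Fin w) : p j x = p j x' := by
  obtain ⟨s, rfl⟩ := ρ.surjective x
  obtain ⟨t, rfl⟩ := ρ.surjective x'
  rcases le_total s t with hst | hst
  · exact (Finset.sum_eq_sum_iff_of_le (fun i _ => hp i hst)).1 hs j (Finset.mem_univ j)
  · exact ((Finset.sum_eq_sum_iff_of_le (fun i _ => hp i hst)).1 hs.symm j
      (Finset.mem_univ j)).symm

/-- Bernoulli's inequality in the form of the AM-GM inequality for `u, 1, …, 1`. -/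
lemma mul_rpow_inv_le (k u : ℝ) (hk : 1 ≤ k) (hu : 0 ≤ u) :
    k * u ^ (1 / k) ≤ u + (k - 1) := by
  have hk0 : 0 < k := by linarith
  have h := rpow_one_add_le_one_add_mul_self (s := u - 1) (by linarith)
    (p := 1 / k) (by positivity) ((div_le_one hk0).2 hk)
  have e : 1 + (u - 1) = u := by ring
  rw [e] at h
  calc k * u ^ (1 / k) ≤ k * (1 + 1 / k * (u - 1)) := by gcongr
    _ = u + (k - 1) := by field_simp; ring

/-- exponential size lower bound for bottom-layer weight-restricted
LTF-of-(ReLU)^{d-1} circuits computing any Boolean function of sign-rank at least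
`2^{m^{1/4}}`. -/
theorem ltf_of_relu_exponential_lower_bound :
    ∃ c : ℝ, 0 < c ∧
      ∀ (m W d : ℕ), 1 ≤ m → 1 ≤ W → 2 ≤ d →
      ∀ f : (Fin m → Bool) → (Fin m → Bool) → ℝ,
        (∀ x y, f x y = 1 ∨ f x y = -1) →
        ((2 : ℝ) ^ ((m : ℝ) ^ ((1 : ℝ) / 4)) ≤ signRank (Matrix.of f)) →
      ∀ (v : ℕ → ℕ), (∀ i < d - 1, 1 ≤ v i) →
      ∀ (a₁ a₂ : Fin (v 0) → Fin m → ℤ) (b : Fin (v 0) → ℤ),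
        (∀ j i, |a₁ j i| ≤ (W : ℤ)) → (∀ j i, |a₂ j i| ≤ (W : ℤ)) →
        (∀ j, |b j| ≤ (W : ℤ)) →
        (∃ ρ : Fin (2 ^ m) ≃ (Fin m → Bool), ∀ j : Fin (v 0),
          Monotone (fun s => ∑ i, (a₁ j i : ℝ) * pmEnc (ρ s) i) ∧
          Monotone (fun s => ∑ i, (a₂ j i : ℝ) * pmEnc (ρ s) i)) →
      ∀ (A : (i : ℕ) → Fin (v (i + 1)) → Fin (v i) → ℝ)
        (bw : (i : ℕ) → Fin (v (i + 1)) → ℝ)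
        (α : Fin (v (d - 2)) → ℝ) (β : ℝ)
        (h : (i : ℕ) → Fin (v i) → (Fin m → Bool) → (Fin m → Bool) → ℝ),
        (∀ j x y, h 0 j x y =
          max 0 ((∑ i, (a₁ j i : ℝ) * pmEnc x i) +
                 (∑ i, (a₂ j i : ℝ) * pmEnc y i) + (b j : ℝ))) →
        (∀ i, i + 1 < d - 1 → ∀ (j : Fin (v (i + 1))) x y,
          h (i + 1) j x y = max 0 (bw i j + ∑ l, A i j l * h i l x y)) →
        (∀ x y, (if 0 ≤ β + ∑ j, α j * h (d - 2) j x y then (1 : ℝ) else -1) = f x y) →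
        c * (d - 1) * (2 : ℝ) ^ ((m : ℝ) ^ ((1 : ℝ) / 8) / (d - 1)) /
            ((m * W : ℝ)) ^ ((1 : ℝ) / (d - 1)) ≤
          ((1 + ∑ i ∈ Finset.range (d - 1), v i : ℕ) : ℝ) := by
  refine ⟨1 / 3, by norm_num, ?_⟩
  intro m W d hm hW hd f hf hsr v hv a₁ a₂ b ha₁ _ _ hρ A bw α β h h0 hstep hout
  obtain ⟨ρ, hρ⟩ := hρ
  obtain ⟨n, rfl⟩ : ∃ n, d = n + 2 := ⟨d - 2, by omega⟩
  simp only [show n + 2 - 1 = n + 1 by omega] at *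
  let z : (Fin m → Bool) → Fin m → ℤ := fun x i => if x i then 1 else -1
  have hz : ∀ x i, ((z x i : ℤ) : ℝ) = pmEnc x i := by
    intro x i
    by_cases hx : x i <;> simp [z, pmEnc, hx]
  have hz1 : ∀ x i, |z x i| = 1 := by
    intro x i
    by_cases hx : x i <;> simp [z, hx]
  let g : (Fin m → Bool) → ℤ := fun x => ∑ j, ∑ i, a₁ j i * z x i
  have hg : ∀ x, |g x| ≤ ((v 0 * (m * W) : ℕ) : ℤ) := by
    intro x
    calc |g x| ≤ ∑ j, |∑ i, a₁ j i * z x i| := Finset.abs_sum_le_sum_abs _ _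
      _ ≤ ∑ _j : Fin (v 0), ∑ _i : Fin m, (W : ℤ) := by
          refine Finset.sum_le_sum fun j _ => (Finset.abs_sum_le_sum_abs _ _).trans ?_
          refine Finset.sum_le_sum fun i _ => ?_
          rw [abs_mul, hz1, mul_one]
          exact ha₁ j i
      _ = _ := by simp
  have hfac : ∀ x x', g x = g x' → f x = f x' := by
    intro x x' hxx
    have hxx' : ∑ j, ∑ i, (a₁ j i : ℝ) * pmEnc x i = ∑ j, ∑ i, (a₁ j i : ℝ) * pmEnc x' i := by
      have := congrArg (fun t : ℤ => (t : ℝ)) hxx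
      simpa only [g, Int.cast_sum, Int.cast_mul, hz] using this
    have hP := rows_eq_of_sum_eq ρ (fun j x => ∑ i, (a₁ j i : ℝ) * pmEnc x i)
      (fun j => (hρ j).1) x x' hxx'
    have hlay : ∀ i, i < n + 1 → ∀ j y, h i j x y = h i j x' y := by
      intro i
      induction i with
      | zero =>
        intro _ j y
        rw [h0, h0]
        simp only [hP j]
      | succ i ih =>
        intro hi j y
        rw [hstep i hi, hstep i hi]
        simp only [ih (by omega)]
    funext y
    rw [← hout x y, ← hout x' y]
    simp only [hlay (n + 2 - 2) (by omega)]
  have hrank := signRank_le_of_factor f hf g _ hg hfac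
  have hw : 1 ≤ v 0 := hv 0 (by omega)
  have hmW : 1 ≤ m * W := Nat.mul_pos hm hW
  have hm' : (1 : ℝ) ≤ m := by exact_mod_cast hm
  have hmWr : (0 : ℝ) < (m : ℝ) * W := by exact_mod_cast hmW
  have hrank' : (signRank (Matrix.of f) : ℝ) ≤ 3 * (v 0 : ℝ) * (m * W) := by
    have hpos : 1 ≤ v 0 * (m * W) := Nat.mul_pos hw hmW
    have : signRank (Matrix.of f) ≤ 3 * v 0 * (m * W) := by
      rw [mul_assoc]; omega
    exact_mod_cast this
  have hT : (2 : ℝ) ^ ((m : ℝ) ^ ((1 : ℝ) / 8)) / (m * W) ≤ 3 * (v 0 : ℝ) := by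
    rw [div_le_iff₀ hmWr]
    refine le_trans ?_ (hsr.trans hrank')
    exact Real.rpow_le_rpow_of_exponent_le (by norm_num)
      (Real.rpow_le_rpow_of_exponent_le hm' (by norm_num))
  have hk : (((n + 2 : ℕ) : ℝ) - 1) = (n : ℝ) + 1 := by push_cast; ring
  rw [hk]
  have hsum : v 0 + n ≤ ∑ i ∈ Finset.range (n + 1), v i := by
    rw [Finset.sum_range_succ', add_comm]
    gcongr
    calc n = ∑ i ∈ Finset.range n, 1 := by simp
      _ ≤ _ := Finset.sum_le_sum fun i hi => hv (i + 1) (by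
          have := Finset.mem_range.1 hi; omega)
  have hsum' : (v 0 : ℝ) + n ≤ ∑ i ∈ Finset.range (n + 1), (v i : ℝ) := by exact_mod_cast hsum
  have hk1 : (1 : ℝ) ≤ (n : ℝ) + 1 := by linarith [Nat.cast_nonneg (α := ℝ) n]
  have hB := mul_rpow_inv_le ((n : ℝ) + 1) (3 * (v 0 : ℝ)) hk1 (by positivity)
  have hroot : (2 : ℝ) ^ ((m : ℝ) ^ ((1 : ℝ) / 8) / ((n : ℝ) + 1)) /
      ((m : ℝ) * W) ^ ((1 : ℝ) / ((n : ℝ) + 1)) ≤ (3 * (v 0 : ℝ)) ^ (1 / ((n : ℝ) + 1)) := by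
    rw [div_eq_mul_one_div ((m : ℝ) ^ ((1 : ℝ) / 8)), Real.rpow_mul (by norm_num),
      ← Real.div_rpow (by positivity) hmWr.le]
    exact Real.rpow_le_rpow (by positivity) hT (by positivity)
  have hfin : ((n : ℝ) + 1) * ((2 : ℝ) ^ ((m : ℝ) ^ ((1 : ℝ) / 8) / ((n : ℝ) + 1)) /
      ((m : ℝ) * W) ^ ((1 : ℝ) / ((n : ℝ) + 1))) ≤ 3 * (v 0 : ℝ) + n := by
    refine (mul_le_mul_of_nonneg_left hroot (by linarith)).trans (hB.trans ?_)
    linarith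
  push_cast
  rw [mul_assoc, mul_div_assoc, mul_div_assoc]
  linarith [Nat.cast_nonneg (α := ℝ) n]
end
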